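/- arXiv:2401.00837 — 2 statements merged into one kernel-verified Lean document; each statement's English description precedes it below -/
import Mathlib

section
/- (Proposition: Gaussian asymptotics) With the zero-drift mostly symmetric setup and δ = n^{-β} for a constant 1/3 < β < 1/2, one has π^{-d} ∫_{(-δ,δ)^d} S̄(e^{iθ_1},…,e^{iθ_d})^n dθ ∼ S(1)^n · n^{-d/2} · S(1)^{d/2} / (π^{d/2} (b_1 ··· b_d)^{1/2}) as n → ∞. -/
open Finset Filter MeasureTheory
open scoped Classical Real

noncomputable section

/-- Total weight of walks of length `n` with steps in `S` (weighted by `w`),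
starting at the origin and never leaving `ℕ^d`. -/
def walkWeight (d : ℕ) (S : Finset (Fin d → ℤ)) (w : (Fin d → ℤ) → ℝ) (n : ℕ) : ℝ :=
  ∑ f : Fin n → {i // i ∈ S},
    if ∀ m : ℕ, m ≤ n → ∀ j : Fin d,
        0 ≤ ∑ k ∈ Finset.univ.filter (fun k : Fin n => (k : ℕ) < m), ((f k : Fin d → ℤ) j)
    then ∏ k : Fin n, w (f k) else 0

/-- The step set `S` (with weights `w`) is symmetric over the `k`-th coordinate axis. -/
def SymmetricAxis (d : ℕ) (S : Finset (Fin d → ℤ)) (w : (Fin d → ℤ) → ℝ) (k : Fin d) : Prop :=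
  ∀ i ∈ S, Function.update i k (-(i k)) ∈ S ∧ w (Function.update i k (-(i k))) = w i

namespace ZeroDrift

variable (d : ℕ) (S : Finset (Fin (d + 1) → ℤ)) (w : (Fin (d + 1) → ℤ) → ℝ)

/-- `S(1)`, the total weight of the step set. -/
def S1 : ℝ := ∑ i ∈ S, w i

/-- `A(ẑ)`: the Laurent polynomial collecting steps with last coordinate `-1`. -/
def AC (z : Fin (d + 1) → ℂ) : ℂ :=
  ∑ i ∈ S.filter fun i => i (Fin.last d) = -1,
    (w i : ℂ) * ∏ j : Fin d, z (Fin.castSucc j) ^ (i (Fin.castSucc j))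

/-- `B(ẑ)`: the Laurent polynomial collecting steps with last coordinate `1`. -/
def BC (z : Fin (d + 1) → ℂ) : ℂ :=
  ∑ i ∈ S.filter fun i => i (Fin.last d) = 1,
    (w i : ℂ) * ∏ j : Fin d, z (Fin.castSucc j) ^ (i (Fin.castSucc j))

/-- `Q(ẑ)`: the Laurent polynomial collecting steps with last coordinate `0`. -/
def QC (z : Fin (d + 1) → ℂ) : ℂ :=
  ∑ i ∈ S.filter fun i => i (Fin.last d) = 0,
    (w i : ℂ) * ∏ j : Fin d, z (Fin.castSucc j) ^ (i (Fin.castSucc j))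

/-- The characteristic Laurent polynomial `S(z)` evaluated at `z : ℂ^{d+1}`. -/
def SC (z : Fin (d + 1) → ℂ) : ℂ :=
  ∑ i ∈ S, (w i : ℂ) * ∏ j : Fin (d + 1), z j ^ (i j)

/-- `S̄(z) = S(z_1,…,z_{d},1/z_{d+1})` evaluated at `z : ℂ^{d+1}`. -/
def SbarC (z : Fin (d + 1) → ℂ) : ℂ :=
  ∑ i ∈ S, (w i : ℂ) *
    (∏ j : Fin d, z (Fin.castSucc j) ^ (i (Fin.castSucc j))) *
    z (Fin.last d) ^ (-(i (Fin.last d)))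

/-- The numerator `G(z,t)` of the diagonal representation. -/
def GC (z : Fin (d + 1) → ℂ) (t : ℂ) : ℂ :=
  (∏ j : Fin d, (1 + z (Fin.castSucc j))) *
    (1 - t * (∏ j, z j) * (QC d S w z + 2 * z (Fin.last d) * AC d S w z))

/-- The denominator `H(z,t) = H_1 H_2 H_3` of the diagonal representation. -/
def HC (z : Fin (d + 1) → ℂ) (t : ℂ) : ℂ :=
  (1 - z (Fin.last d)) * (1 - t * (∏ j, z j) * SbarC d S w z) *
    (1 - t * (∏ j, z j) * (QC d S w z + z (Fin.last d) * AC d S w z))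

/-- The point of `ℂ^{d+1}` with coordinates `i^{m_j}` encoded by `m : Fin (d+1) → Fin 4`. -/
def wOf (m : Fin (d + 1) → Fin 4) : Fin (d + 1) → ℂ :=
  fun j => Complex.I ^ (m j : ℕ)

/-- The (indices of the) finite set `Γ` of possible contributing points: `w_j ∈ {±1}` for
`j ≤ d`, `w_{d+1} ∈ {±1,±i}`, and `|1/(w_1⋯w_{d+1} S(w))| = 1/S(1)`. -/
def GammaIdx : Finset (Fin (d + 1) → Fin 4) :=
  Finset.univ.filter fun m =>
    (∀ j : Fin d, m (Fin.castSucc j) = 0 ∨ m (Fin.castSucc j) = 2) ∧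
    ‖1 / ((∏ j, wOf d m j) * SC d S w (wOf d m))‖ = 1 / S1 d S w

/-- The argument (angle) of the point encoded by `m` in coordinate `j`. -/
def argOf (m : Fin (d + 1) → Fin 4) (j : Fin (d + 1)) : ℝ := (m j : ℕ) * π / 2

/-- The box of angles parametrizing the product of arcs `N_w` for `w = wOf m`. -/
def box (m : Fin (d + 1) → Fin 4) (δ : ℝ) : Set (Fin (d + 1) → ℝ) :=
  Set.univ.pi fun j => Set.Ioo (argOf d m j - δ) (argOf d m j + δ)

/-- The parametrization of the torus `|z_j| = 1` (`j ≤ d`), `|z_{d+1}| = 1 - ε`. -/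
def zOf (ε : ℝ) (θ : Fin (d + 1) → ℝ) : Fin (d + 1) → ℂ :=
  fun j => (if j = Fin.last d then (1 - ε : ℂ) else 1) * Complex.exp (Complex.I * θ j)

/-- Angles parametrizing `N = ⋃_{w ∈ Γ} N_w`. -/
def Nparam (δ : ℝ) : Set (Fin (d + 1) → ℝ) := ⋃ m ∈ GammaIdx d S w, box d m δ

/-- The contour integral `(2πi)^{-(d+2)} ∫_{N × C} G/H · dz dt/(z_1⋯z_{d+1}t)^{n+1}`,
parametrized by angles, where `C` is the circle `|t| = r`. -/
def fullIntegral (n : ℕ) (ε δ r : ℝ) : ℂ :=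
  (((2 * π) ^ (d + 2) : ℝ))⁻¹ •
    ∫ θ in Nparam d S w δ,
      ∫ φ in Set.Ioo 0 (2 * π),
        GC d S w (zOf d ε θ) ((r : ℂ) * Complex.exp (Complex.I * φ)) /
            HC d S w (zOf d ε θ) ((r : ℂ) * Complex.exp (Complex.I * φ)) *
          (((∏ j, zOf d ε θ j) * ((r : ℂ) * Complex.exp (Complex.I * φ))) ^ n)⁻¹

/-- The residue integrand
`[(1+z_1)⋯(1+z_d)/(B(ẑ) z_1⋯z_{d+1})]·[(B(ẑ) - z_{d+1}^2 A(ẑ))/(1-z_{d+1})]·S̄(z)^n`,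
parametrized by angles, including the Jacobian factors `i z_j` of `dz_j`. -/
def resIntegrand (n : ℕ) (ε : ℝ) (θ : Fin (d + 1) → ℝ) : ℂ :=
  ((∏ j : Fin d, (1 + zOf d ε θ (Fin.castSucc j))) /
      (BC d S w (zOf d ε θ) * ∏ j, zOf d ε θ j)) *
    ((BC d S w (zOf d ε θ) - zOf d ε θ (Fin.last d) ^ 2 * AC d S w (zOf d ε θ)) /
      (1 - zOf d ε θ (Fin.last d))) *
    SbarC d S w (zOf d ε θ) ^ n *
    ∏ j, Complex.I * zOf d ε θ j

/-- The contour integral `∫_{N_w} (residue integrand) dz` over the product of arcs `N_w`,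
`w = wOf m`, parametrized by angles. -/
def resIntegral (n : ℕ) (ε δ : ℝ) (m : Fin (d + 1) → Fin 4) : ℂ :=
  ∫ θ in box d m δ, resIntegrand d S w n ε θ

end ZeroDrift

section LaplaceMethod

variable {ι : Type*} [Fintype ι]

/-- A product Gaussian is integrable. -/
theorem integrable_exp_neg_sum_mul_sq {a : ι → ℝ} (ha : ∀ k, 0 < a k) :
    Integrable (fun x : ι → ℝ => Real.exp (-∑ k, a k * x k ^ 2)) := by
  have h := Integrable.fintype_prod (μ := fun _ : ι => (volume : Measure ℝ))
    (f := fun k t => Real.exp (-a k * t ^ 2)) fun k => integrable_exp_neg_mul_sq (ha k)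
  refine h.congr (Eventually.of_forall fun x => ?_)
  simp only [← Real.exp_sum, ← Finset.sum_neg_distrib, neg_mul]

/-- The integral of a product Gaussian. -/
theorem integral_exp_neg_sum_mul_sq (a : ι → ℝ) :
    ∫ x : ι → ℝ, Real.exp (-∑ k, a k * x k ^ 2) = ∏ k, √(π / a k) := by
  simp only [← integral_gaussian]
  rw [← integral_fintype_prod_volume_eq_prod (fun k t => Real.exp (-a k * t ^ 2))]
  simp only [← Real.exp_sum, ← Finset.sum_neg_distrib, neg_mul]

/-- A positive diagonal quadratic form dominates a multiple of the squared norm. -/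
theorem exists_mul_norm_sq_le_sum {a : ι → ℝ} (ha : ∀ k, 0 < a k) :
    ∃ c > 0, ∀ x : ι → ℝ, c * ‖x‖ ^ 2 ≤ ∑ k, a k * x k ^ 2 := by
  cases isEmpty_or_nonempty ι
  · exact ⟨1, one_pos, fun x => by simp [Subsingleton.elim x 0]⟩
  obtain ⟨k₀, hk₀⟩ := Finite.exists_min a
  refine ⟨a k₀, ha k₀, fun x => ?_⟩
  obtain ⟨l, hl⟩ := Finite.exists_max fun k => ‖x k‖
  have hx : ‖x‖ ≤ ‖x l‖ := (pi_norm_le_iff_of_nonneg (norm_nonneg _)).2 hl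
  calc a k₀ * ‖x‖ ^ 2 ≤ a l * ‖x l‖ ^ 2 := by
        gcongr
        · exact (ha l).le
        · exact hk₀ l
    _ = a l * x l ^ 2 := by rw [Real.norm_eq_abs, sq_abs]
    _ ≤ _ := Finset.single_le_sum (f := fun k => a k * x k ^ 2)
        (fun k _ => mul_nonneg (ha k).le (sq_nonneg _)) (Finset.mem_univ l)

/-- A function with Gaussian second-order behaviour at the origin is bounded near the origin by a
Gaussian. -/
theorem eventually_norm_le_exp_neg_half {a : ι → ℝ} (ha : ∀ k, 0 < a k) {f : (ι → ℝ) → ℂ} {C : ℝ}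
    (hf : ∀ᶠ θ in nhds 0, ‖f θ - (1 - (∑ k, a k * θ k ^ 2 : ℝ))‖ ≤ C * ‖θ‖ ^ 3) :
    ∀ᶠ θ in nhds 0, ‖f θ‖ ≤ Real.exp (-∑ k, a k / 2 * θ k ^ 2) := by
  obtain ⟨c, hc, hcQ⟩ := exists_mul_norm_sq_le_sum ha
  have h1 : ∀ᶠ θ : ι → ℝ in nhds 0, ∑ k, a k * θ k ^ 2 < 1 := by
    refine Continuous.tendsto' (by fun_prop) (0 : ι → ℝ) 0 (by simp) |>.eventually_lt_const one_pos
  have h2 : ∀ᶠ θ : ι → ℝ in nhds 0, C * ‖θ‖ < c / 2 := by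
    refine Continuous.tendsto' (by fun_prop) (0 : ι → ℝ) 0 (by simp) |>.eventually_lt_const
      (half_pos hc)
  filter_upwards [hf, h1, h2] with θ h h1 h2
  have hQ := hcQ θ
  have hhalf : ∑ k, a k / 2 * θ k ^ 2 = (∑ k, a k * θ k ^ 2) / 2 := by
    rw [Finset.sum_div]
    exact Finset.sum_congr rfl fun k _ => by ring
  rw [hhalf]
  set Q := ∑ k, a k * θ k ^ 2
  have hR : C * ‖θ‖ ^ 3 ≤ Q / 2 := by nlinarith [sq_nonneg ‖θ‖]
  have hmain : ‖(1 - (Q : ℂ))‖ = 1 - Q := by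
    rw [← Complex.ofReal_one, ← Complex.ofReal_sub, Complex.norm_real, Real.norm_eq_abs,
      abs_of_nonneg (by linarith)]
  calc ‖f θ‖ = ‖(f θ - (1 - (Q : ℂ))) + (1 - (Q : ℂ))‖ := by rw [sub_add_cancel]
    _ ≤ ‖f θ - (1 - (Q : ℂ))‖ + ‖(1 - (Q : ℂ))‖ := norm_add_le _ _
    _ ≤ -(Q / 2) + 1 := by rw [hmain]; linarith
    _ ≤ Real.exp (-(Q / 2)) := Real.add_one_le_exp _

theorem tendsto_inv_sqrt_natCast : Tendsto (fun n : ℕ => (√(n : ℝ))⁻¹) atTop (nhds 0) :=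
  (Real.tendsto_sqrt_atTop.comp tendsto_natCast_atTop_atTop).inv_tendsto_atTop

/-- Pointwise convergence of the rescaled powers to a Gaussian. -/
theorem tendsto_pow_inv_sqrt_smul {a : ι → ℝ} {f : (ι → ℝ) → ℂ} {C : ℝ}
    (hf : ∀ᶠ θ in nhds 0, ‖f θ - (1 - (∑ k, a k * θ k ^ 2 : ℝ))‖ ≤ C * ‖θ‖ ^ 3) (x : ι → ℝ) :
    Tendsto (fun n : ℕ => f ((√(n : ℝ))⁻¹ • x) ^ n) atTop
      (nhds (Real.exp (-∑ k, a k * x k ^ 2) : ℂ)) := by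
  have hs : Tendsto (fun n : ℕ => (√(n : ℝ))⁻¹ • x) atTop (nhds 0) := by
    simpa using tendsto_inv_sqrt_natCast.smul_const x
  have key : Tendsto (fun n : ℕ => (n : ℂ) * (f ((√(n : ℝ))⁻¹ • x) - 1)) atTop
      (nhds (-(∑ k, a k * x k ^ 2 : ℝ) : ℂ)) := by
    rw [tendsto_iff_norm_sub_tendsto_zero]
    have hb : Tendsto (fun n : ℕ => C * ‖x‖ ^ 3 * (√(n : ℝ))⁻¹) atTop (nhds 0) := by
      simpa using tendsto_inv_sqrt_natCast.const_mul (C * ‖x‖ ^ 3)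
    refine squeeze_zero' (Eventually.of_forall fun n => norm_nonneg _) ?_ hb
    filter_upwards [hs.eventually hf, eventually_gt_atTop 0] with n hn hpos
    have hn0 : (0 : ℝ) < n := by exact_mod_cast hpos
    have hsq : (√(n : ℝ)) ^ 2 = n := Real.sq_sqrt hn0.le
    have hs0 : 0 < √(n : ℝ) := Real.sqrt_pos.2 hn0
    have hQ : ∑ k, a k * ((√(n : ℝ))⁻¹ • x) k ^ 2 = (∑ k, a k * x k ^ 2) / n := by
      rw [Finset.sum_div]
      refine Finset.sum_congr rfl fun k _ => ?_
      rw [Pi.smul_apply, smul_eq_mul, mul_pow, inv_pow, hsq]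
      ring
    rw [hQ, norm_smul, norm_inv, Real.norm_of_nonneg hs0.le] at hn
    have hnC : (n : ℂ) ≠ 0 := by exact_mod_cast hpos.ne'
    have hid : (n : ℂ) * (f ((√(n : ℝ))⁻¹ • x) - 1) - (-(∑ k, a k * x k ^ 2 : ℝ) : ℂ)
        = n * (f ((√(n : ℝ))⁻¹ • x) - (1 - (((∑ k, a k * x k ^ 2) / n : ℝ) : ℂ))) := by
      push_cast
      field_simp
      ring
    rw [hid, norm_mul, Complex.norm_natCast]
    calc (n : ℝ) * _ ≤ n * (C * ((√(n : ℝ))⁻¹ * ‖x‖) ^ 3) := by gcongr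
      _ = √(n : ℝ) ^ 2 * (C * ((√(n : ℝ))⁻¹ * ‖x‖) ^ 3) := by rw [hsq]
      _ = C * ‖x‖ ^ 3 * (√(n : ℝ))⁻¹ := by field_simp
  have h := Complex.tendsto_one_add_pow_exp_of_tendsto key
  simpa using h

/-- Laplace's method on the shrinking cubes `(-n^{-β}, n^{-β})^ι` for a function with
nondegenerate diagonal Gaussian second-order behaviour at the origin. -/
theorem tendsto_sqrt_pow_mul_integral_ball_pow {a : ι → ℝ} (ha : ∀ k, 0 < a k)
    {f : (ι → ℝ) → ℂ} (hfc : Continuous f) {C : ℝ}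
    (hf : ∀ᶠ θ in nhds 0, ‖f θ - (1 - (∑ k, a k * θ k ^ 2 : ℝ))‖ ≤ C * ‖θ‖ ^ 3)
    {β : ℝ} (hβ0 : 0 < β) (hβ : β < 1 / 2) :
    Tendsto (fun n : ℕ => ((√(n : ℝ)) ^ Fintype.card ι : ℝ) •
        ∫ θ in Metric.ball (0 : ι → ℝ) ((n : ℝ) ^ (-β)), f θ ^ n) atTop
      (nhds (∏ k, √(π / a k) : ℝ)) := by
  set F : ℕ → (ι → ℝ) → ℂ := fun n x =>
    (Metric.ball (0 : ι → ℝ) ((n : ℝ) ^ (-β))).indicator (fun θ => f θ ^ n) ((√(n : ℝ))⁻¹ • x)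
    with hF
  have hscale : ∀ n : ℕ, ∫ x, F n x = ((√(n : ℝ)) ^ Fintype.card ι : ℝ) •
      ∫ θ in Metric.ball (0 : ι → ℝ) ((n : ℝ) ^ (-β)), f θ ^ n := by
    intro n
    rw [hF, Measure.integral_comp_smul, integral_indicator measurableSet_ball,
      Module.finrank_fintype_fun_eq_card, inv_pow, inv_inv, abs_of_nonneg (by positivity)]
  simp only [← hscale]
  rw [← integral_exp_neg_sum_mul_sq, ← integral_complex_ofReal]
  obtain ⟨r, hr, hball⟩ := Metric.eventually_nhds_iff_ball.1
    (eventually_norm_le_exp_neg_half ha hf)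
  refine tendsto_integral_filter_of_dominated_convergence
    (fun x => Real.exp (-∑ k, a k / 2 * x k ^ 2)) ?_ ?_
    (integrable_exp_neg_sum_mul_sq fun k => half_pos (ha k)) ?_
  · refine Eventually.of_forall fun n => ?_
    have hm : Measurable ((Metric.ball (0 : ι → ℝ) ((n : ℝ) ^ (-β))).indicator
        fun θ => f θ ^ n) := (hfc.pow n).measurable.indicator measurableSet_ball
    exact (hm.comp (measurable_const_smul _)).aestronglyMeasurable
  · have hsmall : ∀ᶠ n : ℕ in atTop, (n : ℝ) ^ (-β) < r :=
      ((tendsto_rpow_neg_atTop hβ0).comp tendsto_natCast_atTop_atTop).eventually_lt_const hr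
    filter_upwards [hsmall, eventually_gt_atTop 0] with n hn hpos
    refine Eventually.of_forall fun x => ?_
    by_cases hx : (√(n : ℝ))⁻¹ • x ∈ Metric.ball (0 : ι → ℝ) ((n : ℝ) ^ (-β))
    · have hle := hball _ (Metric.ball_subset_ball hn.le hx)
      have hn0 : (n : ℝ) ≠ 0 := by exact_mod_cast hpos.ne'
      simp only [hF, Set.indicator_of_mem hx, norm_pow]
      calc _ ≤ _ := pow_le_pow_left₀ (norm_nonneg _) hle n
        _ = _ := by
          rw [← Real.exp_nat_mul, mul_neg, Finset.mul_sum]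
          congr 2
          refine Finset.sum_congr rfl fun k _ => ?_
          rw [Pi.smul_apply, smul_eq_mul, mul_pow, inv_pow, Real.sq_sqrt (Nat.cast_nonneg n)]
          field_simp
    · simp only [hF, Set.indicator_of_notMem hx, norm_zero]
      positivity
  · refine Eventually.of_forall fun x => ?_
    refine (tendsto_pow_inv_sqrt_smul hf x).congr' ?_
    have hmem : Tendsto (fun n : ℕ => (n : ℝ) ^ (-(1 / 2 - β)) * ‖x‖) atTop (nhds 0) := by
      simpa using ((tendsto_rpow_neg_atTop (sub_pos.2 hβ)).comp
        tendsto_natCast_atTop_atTop).mul_const ‖x‖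
    filter_upwards [hmem.eventually_lt_const one_pos, eventually_gt_atTop 0] with n hn hpos
    have hn0 : (0 : ℝ) < n := by exact_mod_cast hpos
    refine (Set.indicator_of_mem (s := Metric.ball (0 : ι → ℝ) ((n : ℝ) ^ (-β)))
      (f := fun θ => f θ ^ n) ?_).symm
    rw [mem_ball_zero_iff, norm_smul, norm_inv, Real.norm_of_nonneg (Real.sqrt_nonneg _),
      Real.sqrt_eq_rpow, ← Real.rpow_neg hn0.le]
    calc (n : ℝ) ^ (-(1 / 2) : ℝ) * ‖x‖
        = (n : ℝ) ^ (-β) * ((n : ℝ) ^ (-(1 / 2 - β)) * ‖x‖) := by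
          rw [← mul_assoc, ← Real.rpow_add hn0]
          ring_nf
      _ < (n : ℝ) ^ (-β) * 1 := by gcongr
      _ = _ := mul_one _

end LaplaceMethod

namespace ZeroDrift

variable {d : ℕ} {S : Finset (Fin (d + 1) → ℤ)} {w : (Fin (d + 1) → ℤ) → ℝ}

/-- The sign with which the `j`-th coordinate of a step enters the phase of `S̄(e^{iθ})`. -/
def phaseSign (d : ℕ) (j : Fin (d + 1)) : ℝ := if j = Fin.last d then -1 else 1

/-- The phase of the monomial of `S̄(e^{iθ})` belonging to the step `i`. -/
def phase (i : Fin (d + 1) → ℤ) (θ : Fin (d + 1) → ℝ) : ℝ :=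
  ∑ j, phaseSign d j * i j * θ j

theorem SbarC_exp (θ : Fin (d + 1) → ℝ) :
    SbarC d S w (fun j => Complex.exp (Complex.I * θ j)) =
      ∑ i ∈ S, (w i : ℂ) * Complex.exp (Complex.I * phase i θ) := by
  refine Finset.sum_congr rfl fun i _ => ?_
  simp only [← Complex.exp_int_mul, ← Complex.exp_sum, mul_assoc, ← Complex.exp_add]
  congr 2
  simp only [phase, phaseSign, Fin.sum_univ_castSucc, Fin.castSucc_ne_last, if_true, if_false]
  push_cast
  rw [mul_add, Finset.mul_sum]
  congr 1
  · exact Finset.sum_congr rfl fun j _ => by ring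
  · ring

theorem sum_eq_zero_of_odd {k : Fin (d + 1)} (hk : SymmetricAxis (d + 1) S w k)
    {g : (Fin (d + 1) → ℤ) → ℝ} (hg : ∀ i, g (Function.update i k (-(i k))) = -g i) :
    ∑ i ∈ S, w i * g i = 0 := by
  have h : ∑ i ∈ S, w i * g i = ∑ i ∈ S, -(w i * g i) := by
    refine Finset.sum_bij' (fun i _ => Function.update i k (-(i k)))
      (fun i _ => Function.update i k (-(i k))) (fun i hi => (hk i hi).1) (fun i hi => (hk i hi).1)
      (fun i _ => by simp) (fun i _ => by simp) fun i hi => ?_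
    rw [(hk i hi).2, hg]
    ring
  rw [Finset.sum_neg_distrib] at h
  linarith

theorem sum_mul_coord
    (hstep : ∀ i ∈ S, (∀ j, i j = -1 ∨ i j = 0 ∨ i j = 1) ∧ i ≠ 0)
    (hsym : ∀ k : Fin d, SymmetricAxis (d + 1) S w (Fin.castSucc k))
    (hzero : (∑ i ∈ S.filter fun i => i (Fin.last d) = -1, w i)
      = ∑ i ∈ S.filter fun i => i (Fin.last d) = 1, w i)
    (k : Fin (d + 1)) : ∑ i ∈ S, w i * (i k : ℝ) = 0 := by
  induction k using Fin.lastCases with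
  | cast k => exact sum_eq_zero_of_odd (hsym k) fun i => by simp
  | last =>
    rw [Finset.sum_filter, Finset.sum_filter, ← sub_eq_zero, ← Finset.sum_sub_distrib] at hzero
    rw [← neg_eq_zero, ← hzero, ← Finset.sum_neg_distrib]
    refine Finset.sum_congr rfl fun i hi => ?_
    rcases (hstep i hi).1 (Fin.last d) with h | h | h <;> simp [h]

theorem sum_mul_coord_sq
    (hstep : ∀ i ∈ S, (∀ j, i j = -1 ∨ i j = 0 ∨ i j = 1) ∧ i ≠ 0)
    (hsym : ∀ k : Fin d, SymmetricAxis (d + 1) S w (Fin.castSucc k))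
    (hzero : (∑ i ∈ S.filter fun i => i (Fin.last d) = -1, w i)
      = ∑ i ∈ S.filter fun i => i (Fin.last d) = 1, w i)
    (k : Fin (d + 1)) :
    ∑ i ∈ S, w i * (i k : ℝ) ^ 2 = 2 * ∑ i ∈ S.filter fun i => i k = 1, w i := by
  rw [← sub_zero (2 * _), ← sum_mul_coord hstep hsym hzero k, Finset.sum_filter, Finset.mul_sum,
    ← Finset.sum_sub_distrib]
  refine Finset.sum_congr rfl fun i hi => ?_
  rcases (hstep i hi).1 k with h | h | h <;> simp [h]
  ring

theorem sum_mul_coord_mul_coord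
    (hsym : ∀ k : Fin d, SymmetricAxis (d + 1) S w (Fin.castSucc k))
    {k l : Fin (d + 1)} (hkl : k ≠ l) :
    ∑ i ∈ S, w i * ((i k : ℝ) * i l) = 0 := by
  induction k using Fin.lastCases with
  | cast k => exact sum_eq_zero_of_odd (hsym k) fun i => by simp [hkl.symm]
  | last =>
    induction l using Fin.lastCases with
    | cast l => exact sum_eq_zero_of_odd (hsym l) fun i => by simp [hkl]
    | last => exact absurd rfl hkl

theorem sum_mul_phase
    (hstep : ∀ i ∈ S, (∀ j, i j = -1 ∨ i j = 0 ∨ i j = 1) ∧ i ≠ 0)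
    (hsym : ∀ k : Fin d, SymmetricAxis (d + 1) S w (Fin.castSucc k))
    (hzero : (∑ i ∈ S.filter fun i => i (Fin.last d) = -1, w i)
      = ∑ i ∈ S.filter fun i => i (Fin.last d) = 1, w i)
    (θ : Fin (d + 1) → ℝ) : ∑ i ∈ S, w i * phase i θ = 0 := by
  simp only [phase, Finset.mul_sum]
  rw [Finset.sum_comm]
  refine Finset.sum_eq_zero fun j _ => ?_
  calc _ = phaseSign d j * θ j * ∑ i ∈ S, w i * (i j : ℝ) := by
        rw [Finset.mul_sum]
        exact Finset.sum_congr rfl fun i _ => by ring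
    _ = 0 := by rw [sum_mul_coord hstep hsym hzero, mul_zero]

theorem sum_mul_phase_sq
    (hstep : ∀ i ∈ S, (∀ j, i j = -1 ∨ i j = 0 ∨ i j = 1) ∧ i ≠ 0)
    (hsym : ∀ k : Fin d, SymmetricAxis (d + 1) S w (Fin.castSucc k))
    (hzero : (∑ i ∈ S.filter fun i => i (Fin.last d) = -1, w i)
      = ∑ i ∈ S.filter fun i => i (Fin.last d) = 1, w i)
    (θ : Fin (d + 1) → ℝ) :
    ∑ i ∈ S, w i * phase i θ ^ 2 =
      2 * ∑ k, (∑ i ∈ S.filter fun i => i k = 1, w i) * θ k ^ 2 := by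
  have hcomm : ∑ i ∈ S, w i * phase i θ ^ 2 = ∑ k, ∑ l,
      phaseSign d k * θ k * (phaseSign d l * θ l) * ∑ i ∈ S, w i * ((i k : ℝ) * i l) := by
    simp only [phase, pow_two, Finset.sum_mul_sum]
    simp only [Finset.mul_sum]
    rw [Finset.sum_comm]
    refine Finset.sum_congr rfl fun k _ => ?_
    rw [Finset.sum_comm]
    refine Finset.sum_congr rfl fun l _ => Finset.sum_congr rfl fun i _ => by ring
  rw [hcomm, Finset.mul_sum]
  refine Finset.sum_congr rfl fun k _ => ?_
  rw [Finset.sum_eq_single k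
    (fun l _ hl => by rw [sum_mul_coord_mul_coord hsym hl.symm, mul_zero]) (by simp)]
  simp only [← pow_two]
  rw [sum_mul_coord_sq hstep hsym hzero]
  have hs : phaseSign d k ^ 2 = 1 := by unfold phaseSign; split_ifs <;> norm_num
  rw [mul_pow, hs]
  ring

theorem abs_phase_le {i : Fin (d + 1) → ℤ} (hi : ∀ j, i j = -1 ∨ i j = 0 ∨ i j = 1)
    (θ : Fin (d + 1) → ℝ) : |phase i θ| ≤ (d + 1) * ‖θ‖ := by
  calc |phase i θ| ≤ ∑ j, |phaseSign d j * i j * θ j| := Finset.abs_sum_le_sum_abs _ _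
    _ ≤ ∑ _j : Fin (d + 1), ‖θ‖ := by
      refine Finset.sum_le_sum fun j _ => ?_
      have hθ : |θ j| ≤ ‖θ‖ := norm_le_pi_norm θ j
      have hs : |phaseSign d j| = 1 := by unfold phaseSign; split_ifs <;> norm_num
      rw [abs_mul, abs_mul, hs]
      rcases hi j with h | h | h <;> simp [h, hθ]
    _ = (d + 1) * ‖θ‖ := by simp

theorem norm_exp_I_mul_sub_le {u : ℝ} (hu : |u| ≤ 1) :
    ‖Complex.exp (Complex.I * u) - (1 + Complex.I * u - u ^ 2 / 2)‖ ≤ |u| ^ 3 := by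
  have hn : ‖Complex.I * (u : ℂ)‖ = |u| := by simp
  have h := Complex.exp_bound (x := Complex.I * u) (hn.le.trans hu) (n := 3) (by norm_num)
  have hsum : ∑ m ∈ Finset.range 3, (Complex.I * (u : ℂ)) ^ m / (m.factorial : ℂ)
      = 1 + Complex.I * u - u ^ 2 / 2 := by
    simp [Finset.sum_range_succ, mul_pow]
    ring
  rw [hsum, hn] at h
  refine h.trans (mul_le_of_le_one_right (by positivity) ?_)
  norm_num [Nat.factorial]

theorem eventually_norm_SbarC_sub_le
    (hstep : ∀ i ∈ S, (∀ j, i j = -1 ∨ i j = 0 ∨ i j = 1) ∧ i ≠ 0)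
    (hw : ∀ i ∈ S, 0 < w i)
    (hsym : ∀ k : Fin d, SymmetricAxis (d + 1) S w (Fin.castSucc k))
    (hzero : (∑ i ∈ S.filter fun i => i (Fin.last d) = -1, w i)
      = ∑ i ∈ S.filter fun i => i (Fin.last d) = 1, w i) (hS : 0 < S1 d S w) :
    ∀ᶠ θ : Fin (d + 1) → ℝ in nhds 0,
      ‖(S1 d S w : ℂ)⁻¹ * SbarC d S w (fun j => Complex.exp (Complex.I * θ j)) -
        (1 - (∑ k, (∑ i ∈ S.filter fun i => i k = 1, w i) / S1 d S w * θ k ^ 2 : ℝ))‖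
        ≤ ((d : ℝ) + 1) ^ 3 * ‖θ‖ ^ 3 := by
  have hsmall : ∀ᶠ θ : Fin (d + 1) → ℝ in nhds 0, ((d : ℝ) + 1) * ‖θ‖ < 1 :=
    Continuous.tendsto' (by fun_prop) (0 : Fin (d + 1) → ℝ) 0 (by simp)
      |>.eventually_lt_const one_pos
  filter_upwards [hsmall] with θ hθ
  have hSC : (S1 d S w : ℂ) ≠ 0 := by exact_mod_cast hS.ne'
  have h1 : (∑ i ∈ S, (w i : ℂ) * phase i θ) = 0 := by
    exact_mod_cast sum_mul_phase hstep hsym hzero θ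
  have h2 : (∑ i ∈ S, (w i : ℂ) * (phase i θ : ℂ) ^ 2) =
      2 * (∑ k, (∑ i ∈ S.filter fun i => i k = 1, w i) * θ k ^ 2 : ℝ) := by
    exact_mod_cast sum_mul_phase_sq hstep hsym hzero θ
  have hQ : ∑ k, (∑ i ∈ S.filter fun i => i k = 1, w i) / S1 d S w * θ k ^ 2
      = (S1 d S w)⁻¹ * ∑ k, (∑ i ∈ S.filter fun i => i k = 1, w i) * θ k ^ 2 := by
    rw [Finset.mul_sum]
    exact Finset.sum_congr rfl fun k _ => by ring
  have hexpand : ∑ i ∈ S, (w i : ℂ) * (1 + Complex.I * phase i θ - (phase i θ : ℂ) ^ 2 / 2)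
      = (S1 d S w : ℂ) - (∑ k, (∑ i ∈ S.filter fun i => i k = 1, w i) * θ k ^ 2 : ℝ) := by
    calc _ = (∑ i ∈ S, (w i : ℂ)) + Complex.I * (∑ i ∈ S, (w i : ℂ) * phase i θ)
          - (∑ i ∈ S, (w i : ℂ) * (phase i θ : ℂ) ^ 2) / 2 := by
          rw [Finset.mul_sum, Finset.sum_div, ← Finset.sum_add_distrib, ← Finset.sum_sub_distrib]
          exact Finset.sum_congr rfl fun i _ => by ring
      _ = _ := by
          rw [h1, h2, S1, Complex.ofReal_sum S]
          ring
  have hdiff : (S1 d S w : ℂ)⁻¹ * SbarC d S w (fun j => Complex.exp (Complex.I * θ j)) -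
        (1 - (∑ k, (∑ i ∈ S.filter fun i => i k = 1, w i) / S1 d S w * θ k ^ 2 : ℝ))
      = (S1 d S w : ℂ)⁻¹ * ∑ i ∈ S, (w i : ℂ) * (Complex.exp (Complex.I * phase i θ) -
          (1 + Complex.I * phase i θ - (phase i θ : ℂ) ^ 2 / 2)) := by
    simp only [mul_sub _ (Complex.exp _), Finset.sum_sub_distrib]
    rw [hexpand, ← SbarC_exp, hQ, Complex.ofReal_mul, Complex.ofReal_inv]
    field_simp
  rw [hdiff, norm_mul, norm_inv, Complex.norm_real, Real.norm_of_nonneg hS.le, inv_mul_le_iff₀ hS]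
  calc _ ≤ ∑ i ∈ S, w i * (((d : ℝ) + 1) ^ 3 * ‖θ‖ ^ 3) := by
        refine norm_sum_le_of_le _ fun i hi => ?_
        have hp := abs_phase_le (hstep i hi).1 θ
        rw [norm_mul, Complex.norm_real, Real.norm_of_nonneg (hw i hi).le, ← mul_pow]
        refine mul_le_mul_of_nonneg_left ?_ (hw i hi).le
        exact (norm_exp_I_mul_sub_le (hp.trans hθ.le)).trans (by gcongr)
    _ = _ := by rw [← Finset.sum_mul, S1]

theorem box_zero_eq_ball {δ : ℝ} (hδ : 0 < δ) :
    box d (fun _ => 0) δ = Metric.ball (0 : Fin (d + 1) → ℝ) δ := by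
  ext θ
  simp [box, argOf, pi_norm_lt_iff hδ, abs_lt]

end ZeroDrift

/-- Proposition (Gaussian asymptotics): with `δ = n^{-β}`, `1/3 < β < 1/2`,
`π^{-(d+1)} ∫_{(-δ,δ)^{d+1}} S̄(e^{iθ})^n dθ ∼ S(1)^n n^{-(d+1)/2} S(1)^{(d+1)/2}/(π^{(d+1)/2}(b_1⋯b_{d+1})^{1/2})`. -/
theorem gaussian_asymptotics
    (d : ℕ) (S : Finset (Fin (d + 1) → ℤ)) (w : (Fin (d + 1) → ℤ) → ℝ)
    (hstep : ∀ i ∈ S, (∀ j, i j = -1 ∨ i j = 0 ∨ i j = 1) ∧ i ≠ 0)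
    (hw : ∀ i ∈ S, 0 < w i)
    (hsym : ∀ k : Fin d, SymmetricAxis (d + 1) S w (Fin.castSucc k))
    (hfwd : ∀ k : Fin (d + 1), ∃ i ∈ S, i k = 1)
    (hbwd : ∀ k : Fin (d + 1), ∃ i ∈ S, i k = -1)
    (hzero : (∑ i ∈ S.filter fun i => i (Fin.last d) = -1, w i)
        = ∑ i ∈ S.filter fun i => i (Fin.last d) = 1, w i)
    (β : ℝ) (hβ1 : 1 / 3 < β) (hβ2 : β < 1 / 2) :
    Tendsto (fun n : ℕ =>
      ((((π : ℝ) ^ (d + 1))⁻¹ : ℝ) •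
          ∫ θ in ZeroDrift.box d (fun _ => 0) ((n : ℝ) ^ (-β)),
            ZeroDrift.SbarC d S w (fun j => Complex.exp (Complex.I * θ j)) ^ n) /
        ((ZeroDrift.S1 d S w ^ n * (n : ℝ) ^ (-((d : ℝ) + 1) / 2) *
            (ZeroDrift.S1 d S w ^ (((d : ℝ) + 1) / 2) /
              ((π : ℝ) ^ (((d : ℝ) + 1) / 2) *
                Real.sqrt (∏ k : Fin (d + 1),
                  ∑ i ∈ S.filter fun i => i k = 1, w i))) : ℝ) : ℂ))
      atTop (nhds 1) := by
  set b : Fin (d + 1) → ℝ := fun k => ∑ i ∈ S.filter fun i => i k = 1, w i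
  set s := ZeroDrift.S1 d S w
  have hbpos : ∀ k, 0 < b k := fun k => by
    obtain ⟨i, hi, hik⟩ := hfwd k
    exact Finset.sum_pos (fun j hj => hw j (Finset.mem_filter.1 hj).1)
      ⟨i, Finset.mem_filter.2 ⟨hi, hik⟩⟩
  have hspos : 0 < s := by
    obtain ⟨i, hi, -⟩ := hfwd 0
    exact Finset.sum_pos hw ⟨i, hi⟩
  have hcont : Continuous fun θ : Fin (d + 1) → ℝ =>
      (s : ℂ)⁻¹ * ZeroDrift.SbarC d S w (fun j => Complex.exp (Complex.I * θ j)) := by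
    simp only [ZeroDrift.SbarC_exp, ZeroDrift.phase]
    fun_prop
  have hlim := tendsto_sqrt_pow_mul_integral_ball_pow (a := fun k => b k / s)
    (fun k => div_pos (hbpos k) hspos) hcont
    (ZeroDrift.eventually_norm_SbarC_sub_le hstep hw hsym hzero hspos)
    (by linarith : 0 < β) hβ2
  have hhalf : ∀ x : ℝ, 0 < x → x ^ (((d : ℝ) + 1) / 2) = √x ^ (d + 1) := fun x hx => by
    rw [Real.sqrt_eq_rpow, ← Real.rpow_mul_natCast hx.le]
    congr 1
    push_cast
    ring
  set K : ℝ := s ^ (((d : ℝ) + 1) / 2) / (π ^ (((d : ℝ) + 1) / 2) * √(∏ k, b k)) with hK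
  have hB : 0 < √(∏ k, b k) := Real.sqrt_pos.2 (Finset.prod_pos fun k _ => hbpos k)
  have hπ : 0 < √π := Real.sqrt_pos.2 Real.pi_pos
  have hs' : 0 < √s := Real.sqrt_pos.2 hspos
  have hprod : (∏ k, √(π / (b k / s))) * ((π ^ (d + 1))⁻¹ / K) = 1 := by
    have h1 : ∀ k, √(π / (b k / s)) = √π * √s / √(b k) := fun k => by
      rw [← Real.sqrt_mul Real.pi_pos.le, ← Real.sqrt_div (by positivity), div_div_eq_mul_div]
    have h2 : (π : ℝ) ^ (d + 1) = √π ^ (d + 1) * √π ^ (d + 1) := by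
      rw [← mul_pow, Real.mul_self_sqrt Real.pi_pos.le]
    have h3 : √(∏ k, b k) = ∏ k, √(b k) := Real.sqrt_prod _ fun k _ => (hbpos k).le
    simp only [h1]
    rw [Finset.prod_div_distrib, ← h3, Finset.prod_const, Finset.card_univ, Fintype.card_fin, hK,
      hhalf s hspos, hhalf π Real.pi_pos, h2, mul_pow]
    field_simp
  have hfinal := hlim.mul_const ((((π : ℝ) ^ (d + 1))⁻¹ / K : ℝ) : ℂ)
  rw [← Complex.ofReal_mul, hprod, Complex.ofReal_one] at hfinal
  refine hfinal.congr' ?_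
  filter_upwards [eventually_gt_atTop 0] with n hn
  have hn0 : (0 : ℝ) < n := by exact_mod_cast hn
  have hsqrt : (n : ℝ) ^ (-((d : ℝ) + 1) / 2) = (√(n : ℝ) ^ (d + 1))⁻¹ := by
    rw [← hhalf _ hn0, ← Real.rpow_neg hn0.le]
    ring_nf
  rw [ZeroDrift.box_zero_eq_ball (Real.rpow_pos_of_pos hn0 _), hsqrt]
  simp only [mul_pow, integral_const_mul, Complex.real_smul, Fintype.card_fin]
  push_cast
  simp only [div_eq_mul_inv, mul_inv, inv_inv, inv_pow]
  ring

end
end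

section
/- (Proposition: other points are negligible) With the zero-drift mostly symmetric setup and running assumptions ε = n^{-α}, δ = n^{-β} (1/2 < α < 2β, α + β > 1, 1/3 < β < 1/2), for every w ∈ Γ with w ≠ (1,…,1), the integral ∫_{N_w} [(1+z_1)···(1+z_{d-1}) / (B(ẑ) · z_1···z_d)] · [(B(ẑ) - z_d^2 A(ẑ)) / (1 - z_d)] · S̄(z)^n dz is o(S(1)^n n^{-d/2}) as n → ∞. -/
open Finset Filter MeasureTheory
open scoped Classical Real

noncomputable section

theorem normSq_sum_add_pairwise {ι : Type*} (S : Finset ι) (p : ι → ℝ) (u : ι → ℂ)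
    (hu : ∀ i ∈ S, ‖u i‖ = 1) :
    ‖∑ i ∈ S, (p i : ℂ) * u i‖ ^ 2 + 1 / 2 * ∑ i ∈ S, ∑ k ∈ S, p i * p k * ‖u i - u k‖ ^ 2
      = (∑ i ∈ S, p i) ^ 2 := by
  have hpair : ∀ i ∈ S, ∀ k ∈ S, p i * p k * ‖u i - u k‖ ^ 2
      = 2 * (p i * p k) - 2 * ((p i * (u i).re) * (p k * (u k).re))
        - 2 * ((p i * (u i).im) * (p k * (u k).im)) := by
    intro i hi k hk
    have h1 := hu i hi
    have h2 := hu k hk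
    have h1' : (u i).re ^ 2 + (u i).im ^ 2 = 1 := by
      have := Complex.sq_norm (u i); rw [h1, Complex.normSq_apply] at this; linarith
    have h2' : (u k).re ^ 2 + (u k).im ^ 2 = 1 := by
      have := Complex.sq_norm (u k); rw [h2, Complex.normSq_apply] at this; linarith
    rw [Complex.sq_norm, Complex.normSq_apply, Complex.sub_re, Complex.sub_im]
    linear_combination p i * p k * h1' + p i * p k * h2'
  rw [Finset.sum_congr rfl fun i hi => Finset.sum_congr rfl (hpair i hi)]
  simp only [Finset.sum_sub_distrib, ← Finset.mul_sum, ← Finset.sum_mul]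
  rw [Complex.sq_norm, Complex.normSq_apply]
  simp only [Complex.re_sum, Complex.im_sum, Complex.re_ofReal_mul, Complex.im_ofReal_mul]
  ring

theorem normSq_sum_add_pair_le {ι : Type*} (S : Finset ι) (p : ι → ℝ) (u : ι → ℂ)
    (hp : ∀ i ∈ S, 0 ≤ p i) (hu : ∀ i ∈ S, ‖u i‖ = 1) {i k : ι} (hi : i ∈ S) (hk : k ∈ S) :
    ‖∑ i ∈ S, (p i : ℂ) * u i‖ ^ 2 + 1 / 2 * (p i * p k * ‖u i - u k‖ ^ 2)
      ≤ (∑ i ∈ S, p i) ^ 2 := by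
  rw [← normSq_sum_add_pairwise S p u hu]
  have hnn : ∀ a ∈ S, ∀ b ∈ S, 0 ≤ p a * p b * ‖u a - u b‖ ^ 2 := fun a ha b hb =>
    mul_nonneg (mul_nonneg (hp a ha) (hp b hb)) (sq_nonneg _)
  have h1 := Finset.single_le_sum (f := fun b => p i * p b * ‖u i - u b‖ ^ 2) (hnn i hi) hk
  have h2 := Finset.single_le_sum (f := fun a => ∑ b ∈ S, p a * p b * ‖u a - u b‖ ^ 2)
    (fun a ha => Finset.sum_nonneg (hnn a ha)) hi
  linarith

theorem eq_of_norm_sum_eq {ι : Type*} (S : Finset ι) (p : ι → ℝ) (u : ι → ℂ)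
    (hp : ∀ i ∈ S, 0 < p i) (hu : ∀ i ∈ S, ‖u i‖ = 1)
    (h : ‖∑ i ∈ S, (p i : ℂ) * u i‖ = ∑ i ∈ S, p i) {i k : ι} (hi : i ∈ S) (hk : k ∈ S) :
    u i = u k := by
  have h1 := normSq_sum_add_pair_le S p u (fun a ha => (hp a ha).le) hu hi hk
  rw [h] at h1
  have hpos : 0 < p i * p k := mul_pos (hp i hi) (hp k hk)
  by_contra hne
  have : 0 < ‖u i - u k‖ := norm_pos_iff.mpr (sub_ne_zero.mpr hne)
  have : 0 < p i * p k * ‖u i - u k‖ ^ 2 := by positivity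
  linarith

theorem two_div_pi_mul_abs_le_norm_exp_sub_exp {x y : ℝ} (h : |x - y| ≤ π) :
    2 / π * |x - y| ≤ ‖Complex.exp (Complex.I * x) - Complex.exp (Complex.I * y)‖ := by
  have h0 : Complex.exp (Complex.I * x) - Complex.exp (Complex.I * y)
      = Complex.exp (Complex.I * y) * (Complex.exp (Complex.I * (x - y : ℝ)) - 1) := by
    rw [mul_sub, ← Complex.exp_add]; push_cast; ring_nf
  rw [h0, norm_mul, Complex.norm_exp_I_mul_ofReal, one_mul,
    Complex.norm_exp_I_mul_ofReal_sub_one, Real.norm_eq_abs, abs_mul, abs_two]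
  have h2 := Real.mul_abs_le_abs_sin (x := (x - y) / 2) (by
    rw [abs_div, abs_two]; linarith)
  rw [abs_div, abs_two] at h2
  linarith

theorem integrable_gaussian_pi {ι : Type*} [Fintype ι] (a : ι → ℝ) {c : ℝ} (hc : 0 < c) :
    Integrable fun θ : ι → ℝ => ∏ j, Real.exp (-c * (θ j - a j) ^ 2) := by
  have h1 : ∀ j, Integrable (fun x : ℝ => Real.exp (-c * (x - a j) ^ 2)) := fun j =>
      (integrable_exp_neg_mul_sq hc).comp_sub_right (a j)
  rw [volume_pi]
  exact Integrable.fintype_prod h1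

theorem integral_gaussian_pi {ι : Type*} [Fintype ι] (a : ι → ℝ) (c : ℝ) :
    ∫ θ : ι → ℝ, ∏ j, Real.exp (-c * (θ j - a j) ^ 2) = √(π / c) ^ Fintype.card ι := by
  rw [integral_fintype_prod_volume_eq_prod (fun j x => Real.exp (-c * (x - a j) ^ 2))]
  have h1 : ∀ j, ∫ x : ℝ, Real.exp (-c * (x - a j) ^ 2) = √(π / c) := fun j => by
    rw [integral_sub_right_eq_self (fun x : ℝ => Real.exp (-c * x ^ 2)), integral_gaussian]
  simp only [h1, Finset.prod_const, Finset.card_univ]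

theorem norm_setIntegral_le_gaussian {ι : Type*} [Fintype ι] (f : (ι → ℝ) → ℂ)
    (s : Set (ι → ℝ)) (hs : MeasurableSet s) (a : ι → ℝ) {c K : ℝ} (hc : 0 < c) (hK : 0 ≤ K)
    (hf : ∀ θ ∈ s, ‖f θ‖ ≤ K * ∏ j, Real.exp (-c * (θ j - a j) ^ 2)) :
    ‖∫ θ in s, f θ‖ ≤ K * √(π / c) ^ Fintype.card ι := by
  have hint := (integrable_gaussian_pi a hc).const_mul K
  have hnn : ∀ θ : ι → ℝ, 0 ≤ K * ∏ j, Real.exp (-c * (θ j - a j) ^ 2) := fun θ =>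
    mul_nonneg hK (Finset.prod_nonneg fun j _ => (Real.exp_pos _).le)
  rw [← integral_gaussian_pi a c, ← integral_const_mul]
  exact (norm_integral_le_of_norm_le hint.integrableOn
    ((ae_restrict_iff' hs).mpr (Eventually.of_forall hf))).trans
    (setIntegral_le_integral hint (Eventually.of_forall hnn))

namespace ZeroDrift

variable {d : ℕ} {S : Finset (Fin (d + 1) → ℤ)} {w : (Fin (d + 1) → ℤ) → ℝ}

/-- The linear form `∑ i_j φ_j` over all coordinates but the last. -/
def hatForm (i : Fin (d + 1) → ℤ) (φ : Fin (d + 1) → ℝ) : ℝ :=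
  ∑ j : Fin d, (i j.castSucc : ℝ) * φ j.castSucc

theorem wOf_ne_zero (m : Fin (d + 1) → Fin 4) (j : Fin (d + 1)) : wOf d m j ≠ 0 :=
  pow_ne_zero _ Complex.I_ne_zero

theorem norm_wOf (m : Fin (d + 1) → Fin 4) (j : Fin (d + 1)) : ‖wOf d m j‖ = 1 := by
  simp [wOf]

theorem exp_I_mul_argOf (m : Fin (d + 1) → Fin 4) (j : Fin (d + 1)) :
    Complex.exp (Complex.I * argOf d m j) = wOf d m j := by
  have h : Complex.I * (argOf d m j : ℂ) = ((m j : ℕ) : ℂ) * (π / 2 * Complex.I) := by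
    simp only [argOf]; push_cast; ring
  rw [h, Complex.exp_nat_mul, Complex.exp_pi_div_two_mul_I, wOf]

theorem zOf_castSucc (m : Fin (d + 1) → Fin 4) (ε : ℝ) (θ : Fin (d + 1) → ℝ) (j : Fin d) :
    zOf d ε θ j.castSucc = wOf d m j.castSucc *
      Complex.exp (Complex.I * (θ j.castSucc - argOf d m j.castSucc : ℝ)) := by
  rw [← exp_I_mul_argOf, ← Complex.exp_add, zOf, if_neg (Fin.castSucc_lt_last j).ne, one_mul]
  push_cast; ring_nf

theorem zOf_last (m : Fin (d + 1) → Fin 4) (ε : ℝ) (θ : Fin (d + 1) → ℝ) :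
    zOf d ε θ (Fin.last d) = wOf d m (Fin.last d) * ((1 - ε : ℝ) *
      Complex.exp (Complex.I * (θ (Fin.last d) - argOf d m (Fin.last d) : ℝ))) := by
  rw [← exp_I_mul_argOf, mul_left_comm, ← Complex.exp_add, zOf, if_pos rfl]
  push_cast; ring_nf

theorem exp_I_mul_zpow (x : ℝ) (n : ℤ) :
    Complex.exp (Complex.I * x) ^ n = Complex.exp (Complex.I * (n * x : ℝ)) := by
  rw [← Complex.exp_int_mul]; push_cast; ring_nf

theorem prod_zOf_zpow (m : Fin (d + 1) → Fin 4) (ε : ℝ) (θ : Fin (d + 1) → ℝ)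
    (i : Fin (d + 1) → ℤ) :
    ∏ j : Fin d, zOf d ε θ j.castSucc ^ i j.castSucc
      = (∏ j : Fin d, wOf d m j.castSucc ^ i j.castSucc) *
        Complex.exp (Complex.I * hatForm i fun j => θ j - argOf d m j) := by
  simp only [zOf_castSucc m, mul_zpow, exp_I_mul_zpow, Finset.prod_mul_distrib, hatForm]
  rw [← Complex.exp_sum]
  push_cast
  rw [Finset.mul_sum]

theorem abs_hatForm_le {i : Fin (d + 1) → ℤ} (hi : ∀ j, i j = -1 ∨ i j = 0 ∨ i j = 1)
    {φ : Fin (d + 1) → ℝ} {δ : ℝ} (hφ : ∀ j : Fin d, |φ j.castSucc| ≤ δ) :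
    |hatForm i φ| ≤ d * δ := by
  calc |hatForm i φ| ≤ ∑ j : Fin d, |(i j.castSucc : ℝ) * φ j.castSucc| :=
        Finset.abs_sum_le_sum_abs _ _
    _ ≤ ∑ _j : Fin d, δ := by
        refine Finset.sum_le_sum fun j _ => le_trans ?_ (hφ j)
        rw [abs_mul]
        have h1 : |(i j.castSucc : ℝ)| ≤ 1 := by
          rcases hi j.castSucc with h | h | h <;> simp [h]
        exact mul_le_of_le_one_left (abs_nonneg _) h1
    _ = d * δ := by simp

theorem S1_pos (hw : ∀ i ∈ S, 0 < w i) (hS : S.Nonempty) : 0 < S1 d S w :=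
  Finset.sum_pos hw hS

/-- At a point of `Γ` all monomials of the step set have the same value. -/
theorem exists_common_phase (hw : ∀ i ∈ S, 0 < w i) (hS : S.Nonempty)
    {m : Fin (d + 1) → Fin 4} (hm : m ∈ GammaIdx d S w) :
    ∃ c : ℂ, ‖c‖ = 1 ∧ ∀ i ∈ S, ∏ j, wOf d m j ^ i j = c := by
  have hunit : ∀ i : Fin (d + 1) → ℤ, ‖∏ j, wOf d m j ^ i j‖ = 1 := fun i => by
    simp [norm_prod, norm_zpow, norm_wOf]
  obtain ⟨i₀, hi₀⟩ := hS
  refine ⟨∏ j, wOf d m j ^ i₀ j, hunit i₀, fun i hi => ?_⟩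
  refine eq_of_norm_sum_eq S w (fun i => ∏ j, wOf d m j ^ i j) hw (fun i _ => hunit i) ?_ hi hi₀
  have h := (Finset.mem_filter.mp hm).2.2
  rw [norm_div, norm_one, norm_mul, norm_prod] at h
  simp only [norm_wOf, Finset.prod_const_one, one_mul, one_div, inv_inj] at h
  exact h

theorem prod_wOf_eq_mul_zpow_neg {m : Fin (d + 1) → Fin 4} {c : ℂ} {i : Fin (d + 1) → ℤ}
    (hc : ∏ j, wOf d m j ^ i j = c) :
    ∏ j : Fin d, wOf d m j.castSucc ^ i j.castSucc
      = c * wOf d m (Fin.last d) ^ (-i (Fin.last d)) := by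
  rw [← hc, Fin.prod_univ_castSucc, mul_assoc, ← zpow_add₀ (wOf_ne_zero _ _)]
  simp

theorem prod_wOf_eq_inv_mul_zpow {m : Fin (d + 1) → Fin 4}
    (hm : ∀ j : Fin d, m j.castSucc = 0 ∨ m j.castSucc = 2) {c : ℂ} {i : Fin (d + 1) → ℤ}
    (hc : ∏ j, wOf d m j ^ i j = c) :
    ∏ j : Fin d, wOf d m j.castSucc ^ i j.castSucc
      = c⁻¹ * wOf d m (Fin.last d) ^ i (Fin.last d) := by
  have hinv : ∏ j : Fin d, wOf d m j.castSucc ^ i j.castSucc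
      = (∏ j : Fin d, wOf d m j.castSucc ^ i j.castSucc)⁻¹ := by
    rw [← Finset.prod_inv_distrib]
    refine Finset.prod_congr rfl fun j _ => ?_
    rw [← inv_zpow]
    congr 1
    rcases hm j with h | h <;> simp [wOf, h]
  rw [hinv, prod_wOf_eq_mul_zpow_neg hc, mul_inv, zpow_neg, inv_inv]

/-- The phase of the `i`-th monomial of `S̄` at angular displacement `φ`. -/
def barForm (i : Fin (d + 1) → ℤ) (φ : Fin (d + 1) → ℝ) : ℝ :=
  hatForm i φ - i (Fin.last d) * φ (Fin.last d)

theorem norm_SbarC_zOf {m : Fin (d + 1) → Fin 4}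
    (hm : ∀ j : Fin d, m j.castSucc = 0 ∨ m j.castSucc = 2) {c : ℂ} (hc1 : ‖c‖ = 1)
    (hc : ∀ i ∈ S, ∏ j, wOf d m j ^ i j = c) (ε : ℝ) (θ : Fin (d + 1) → ℝ) :
    ‖SbarC d S w (zOf d ε θ)‖ = ‖∑ i ∈ S, ((w i * (1 - ε) ^ (-i (Fin.last d)) : ℝ) : ℂ) *
      Complex.exp (Complex.I * barForm i fun j => θ j - argOf d m j)‖ := by
  have h : SbarC d S w (zOf d ε θ) = c⁻¹ * ∑ i ∈ S,
      ((w i * (1 - ε) ^ (-i (Fin.last d)) : ℝ) : ℂ) *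
        Complex.exp (Complex.I * barForm i fun j => θ j - argOf d m j) := by
    rw [SbarC, Finset.mul_sum]
    refine Finset.sum_congr rfl fun i hi => ?_
    rw [prod_zOf_zpow m, prod_wOf_eq_inv_mul_zpow hm (hc i hi), zOf_last m, mul_zpow, mul_zpow,
      exp_I_mul_zpow]
    have hexp : Complex.exp (Complex.I * barForm i fun j => θ j - argOf d m j)
        = Complex.exp (Complex.I * hatForm i fun j => θ j - argOf d m j) *
          Complex.exp (Complex.I *
            ((-i (Fin.last d) : ℤ) * (θ (Fin.last d) - argOf d m (Fin.last d)) : ℝ)) := by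
      rw [← Complex.exp_add, barForm]; push_cast; ring_nf
    have hcancel : wOf d m (Fin.last d) ^ i (Fin.last d) *
        wOf d m (Fin.last d) ^ (-i (Fin.last d)) = 1 := by
      rw [← zpow_add₀ (wOf_ne_zero _ _)]; simp
    have hmul : ((w i * (1 - ε) ^ (-i (Fin.last d)) : ℝ) : ℂ)
        = w i * ((1 - ε : ℝ) : ℂ) ^ (-i (Fin.last d)) := by
      rw [Complex.ofReal_mul, Complex.ofReal_zpow]
    rw [hexp, hmul]
    linear_combination (w i : ℂ) * c⁻¹ *
      Complex.exp (Complex.I * hatForm i fun j => θ j - argOf d m j) *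
      ((1 - ε : ℝ) : ℂ) ^ (-i (Fin.last d)) * Complex.exp (Complex.I *
            ((-i (Fin.last d) : ℤ) * (θ (Fin.last d) - argOf d m (Fin.last d)) : ℝ)) * hcancel
  rw [h, norm_mul, norm_inv, hc1, inv_one, one_mul]

theorem sum_weights_zpow_le (hstep : ∀ i ∈ S, (∀ j, i j = -1 ∨ i j = 0 ∨ i j = 1) ∧ i ≠ 0)
    (hw : ∀ i ∈ S, 0 < w i)
    (hzero : (∑ i ∈ S.filter fun i => i (Fin.last d) = -1, w i)
        = ∑ i ∈ S.filter fun i => i (Fin.last d) = 1, w i)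
    {ε : ℝ} (hε1 : ε ≤ 1 / 4) :
    ∑ i ∈ S, w i * (1 - ε) ^ (-i (Fin.last d)) ≤ S1 d S w * (1 + 2 * ε ^ 2) := by
  have hr : (0 : ℝ) < 1 - ε := by linarith
  have hterm : ∀ i ∈ S, w i * (1 - ε) ^ (-i (Fin.last d)) = w i
      + ((if i (Fin.last d) = 1 then w i else 0) * (ε / (1 - ε))
        - (if i (Fin.last d) = -1 then w i else 0) * ε) := by
    intro i hi
    rcases (hstep i hi).1 (Fin.last d) with h | h | h
    · simp [h]; ring
    · simp [h]
    · simp [h]; field_simp; ring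
  rw [Finset.sum_congr rfl hterm, Finset.sum_add_distrib, Finset.sum_sub_distrib,
    ← Finset.sum_mul, ← Finset.sum_mul, ← Finset.sum_filter, ← Finset.sum_filter, hzero]
  have hle : ∑ i ∈ S.filter (fun i => i (Fin.last d) = 1), w i ≤ S1 d S w :=
    Finset.sum_le_sum_of_subset_of_nonneg (Finset.filter_subset _ _) fun i hi _ => (hw i hi).le
  have hnn : 0 ≤ ∑ i ∈ S.filter (fun i => i (Fin.last d) = 1), w i :=
    Finset.sum_nonneg fun i hi => (hw i (Finset.mem_filter.mp hi).1).le
  set b := ∑ i ∈ S.filter (fun i => i (Fin.last d) = 1), w i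
  have hS : ∑ i ∈ S, w i = S1 d S w := rfl
  rw [hS]
  have h1 : b * (ε / (1 - ε)) - b * ε = b * (ε ^ 2 / (1 - ε)) := by field_simp; ring
  have h2 : ε ^ 2 / (1 - ε) ≤ 2 * ε ^ 2 := by
    rw [div_le_iff₀ hr]; nlinarith [sq_nonneg ε]
  rw [h1]
  have h3 : b * (ε ^ 2 / (1 - ε)) ≤ S1 d S w * (2 * ε ^ 2) :=
    mul_le_mul hle h2 (by positivity) (hnn.trans hle)
  linarith

/-- Displacements are controlled by the differences of the phases of the monomials. -/
theorem abs_le_of_abs_barForm_sub_le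
    (hstep : ∀ i ∈ S, (∀ j, i j = -1 ∨ i j = 0 ∨ i j = 1) ∧ i ≠ 0)
    (hsym : ∀ k : Fin d, SymmetricAxis (d + 1) S w (Fin.castSucc k))
    (hfwd : ∀ k : Fin (d + 1), ∃ i ∈ S, i k = 1)
    (hbwd : ∀ k : Fin (d + 1), ∃ i ∈ S, i k = -1)
    {φ : Fin (d + 1) → ℝ} {t : ℝ}
    (ht : ∀ i ∈ S, ∀ k ∈ S, |barForm i φ - barForm k φ| ≤ t) (j : Fin (d + 1)) :
    |φ j| ≤ (d + 1) * t := by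
  have ht0 : 0 ≤ t := by
    obtain ⟨i, hi, -⟩ := hfwd 0
    exact (abs_nonneg _).trans (ht i hi i hi)
  have hhat : ∀ j : Fin d, |φ j.castSucc| ≤ t / 2 := by
    intro j
    obtain ⟨i, hi, hij⟩ := hfwd j.castSucc
    have hk := (hsym j i hi).1
    have h := ht i hi _ hk
    have hdiff : barForm i φ - barForm (Function.update i j.castSucc (-i j.castSucc)) φ
        = 2 * φ j.castSucc := by
      have hl : Function.update i j.castSucc (-i j.castSucc) (Fin.last d) = i (Fin.last d) :=
        Function.update_of_ne (Fin.castSucc_lt_last j).ne' _ _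
      rw [barForm, barForm, hl, hatForm, hatForm, sub_sub_sub_cancel_right,
        ← Finset.sum_sub_distrib, Finset.sum_eq_single j]
      · simp [hij]; ring
      · intro b _ hb
        rw [Function.update_of_ne fun h => hb (Fin.castSucc_injective d h)]
        ring
      · simp
    rw [hdiff, abs_mul, abs_two] at h
    linarith
  induction j using Fin.lastCases with
  | cast j =>
    have := hhat j
    have h0 : (0 : ℝ) ≤ d * t := by positivity
    linarith
  | last =>
    obtain ⟨i, hi, hil⟩ := hfwd (Fin.last d)
    obtain ⟨k, hk, hkl⟩ := hbwd (Fin.last d)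
    have h := ht i hi k hk
    have h1 := abs_hatForm_le (hstep i hi).1 hhat
    have h2 := abs_hatForm_le (hstep k hk).1 hhat
    simp only [barForm, hil, hkl, Int.cast_one, Int.cast_neg] at h
    rw [abs_le] at h h1 h2 ⊢
    constructor <;> nlinarith [h.1, h.2, h1.1, h1.2, h2.1, h2.2]

theorem sq_barForm_sub_le {m : Fin (d + 1) → Fin 4}
    (hstep : ∀ i ∈ S, (∀ j, i j = -1 ∨ i j = 0 ∨ i j = 1) ∧ i ≠ 0)
    (hm : ∀ j : Fin d, m j.castSucc = 0 ∨ m j.castSucc = 2) {c : ℂ} (hc1 : ‖c‖ = 1)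
    (hc : ∀ i ∈ S, ∏ j, wOf d m j ^ i j = c) {μ : ℝ} (hμ : 0 < μ) (hμw : ∀ i ∈ S, μ ≤ w i)
    {ε δ : ℝ} (hε0 : 0 < ε) (hε1 : ε ≤ 1 / 4) (hδ : (d + 1) * δ ≤ 1 / 4)
    {θ : Fin (d + 1) → ℝ} (hθ : ∀ j, |θ j - argOf d m j| ≤ δ)
    {i k : Fin (d + 1) → ℤ} (hi : i ∈ S) (hk : k ∈ S) :
    (barForm i (fun j => θ j - argOf d m j) - barForm k fun j => θ j - argOf d m j) ^ 2
      ≤ π ^ 2 / μ ^ 2 * ((∑ i ∈ S, w i * (1 - ε) ^ (-i (Fin.last d))) ^ 2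
        - ‖SbarC d S w (zOf d ε θ)‖ ^ 2) := by
  have hφb : ∀ i ∈ S, |barForm i fun j => θ j - argOf d m j| ≤ 1 / 4 := by
    intro i hi
    refine le_trans ?_ hδ
    rw [barForm]
    refine (abs_sub _ _).trans ?_
    have h1 := abs_hatForm_le (hstep i hi).1 (φ := fun j => θ j - argOf d m j)
      (fun j => hθ j.castSucc)
    have h2 : |(i (Fin.last d) : ℝ) * (θ (Fin.last d) - argOf d m (Fin.last d))| ≤ δ := by
      refine le_trans ?_ (hθ (Fin.last d))
      rw [abs_mul]
      refine mul_le_of_le_one_left (abs_nonneg _) ?_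
      rcases (hstep i hi).1 (Fin.last d) with h | h | h <;> simp [h]
    linarith
  have hp : ∀ i ∈ S, μ * (3 / 4) ≤ w i * (1 - ε) ^ (-i (Fin.last d)) := by
    intro i hi
    refine mul_le_mul (hμw i hi) ?_ (by norm_num) (hμ.le.trans (hμw i hi))
    have hr : (0 : ℝ) < 1 - ε := by linarith
    rcases (hstep i hi).1 (Fin.last d) with h | h | h
    · simp [h]; linarith
    · simp [h]; norm_num
    · simp only [h, zpow_neg, zpow_one]
      have : 1 ≤ (1 - ε)⁻¹ := (one_le_inv₀ hr).mpr (by linarith)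
      linarith
  have hgap := normSq_sum_add_pair_le S (fun i => w i * (1 - ε) ^ (-i (Fin.last d)))
    (fun i => Complex.exp (Complex.I * barForm i fun j => θ j - argOf d m j))
    (fun i hi => le_trans (by positivity) (hp i hi))
    (fun i _ => Complex.norm_exp_I_mul_ofReal _) hi hk
  rw [← norm_SbarC_zOf hm hc1 hc] at hgap
  have hpi := two_div_pi_mul_abs_le_norm_exp_sub_exp
    (x := barForm i fun j => θ j - argOf d m j) (y := barForm k fun j => θ j - argOf d m j)
    ((abs_sub _ _).trans (by linarith [hφb i hi, hφb k hk, Real.pi_gt_three]))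
  set x := barForm i fun j => θ j - argOf d m j
  set y := barForm k fun j => θ j - argOf d m j
  have hsq : (2 / π) ^ 2 * (x - y) ^ 2
      ≤ ‖Complex.exp (Complex.I * x) - Complex.exp (Complex.I * y)‖ ^ 2 := by
    rw [← sq_abs (x - y), ← mul_pow]
    exact pow_le_pow_left₀ (by positivity) hpi 2
  have hpp : μ ^ 2 / 2 ≤ (w i * (1 - ε) ^ (-i (Fin.last d))) *
      (w k * (1 - ε) ^ (-k (Fin.last d))) := by
    have := mul_le_mul (hp i hi) (hp k hk) (by positivity) (le_trans (by positivity) (hp i hi))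
    nlinarith [sq_nonneg μ]
  have hprod := mul_le_mul hpp hsq (by positivity) (le_trans (by positivity) hpp)
  have hfin : μ ^ 2 / π ^ 2 * (x - y) ^ 2 ≤ (∑ i ∈ S, w i * (1 - ε) ^ (-i (Fin.last d))) ^ 2
        - ‖SbarC d S w (zOf d ε θ)‖ ^ 2 := by
    have he : μ ^ 2 / π ^ 2 * (x - y) ^ 2
        = 1 / 2 * (μ ^ 2 / 2 * ((2 / π) ^ 2 * (x - y) ^ 2)) := by ring
    rw [he]
    linarith
  calc (x - y) ^ 2 = π ^ 2 / μ ^ 2 * (μ ^ 2 / π ^ 2 * (x - y) ^ 2) := by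
        have := Real.pi_pos.ne'
        field_simp
    _ ≤ _ := mul_le_mul_of_nonneg_left hfin (by positivity)

/-- Gaussian decay of `S̄` near the points of `Γ`. -/
theorem exists_norm_SbarC_le
    (hstep : ∀ i ∈ S, (∀ j, i j = -1 ∨ i j = 0 ∨ i j = 1) ∧ i ≠ 0)
    (hw : ∀ i ∈ S, 0 < w i)
    (hsym : ∀ k : Fin d, SymmetricAxis (d + 1) S w (Fin.castSucc k))
    (hfwd : ∀ k : Fin (d + 1), ∃ i ∈ S, i k = 1)
    (hbwd : ∀ k : Fin (d + 1), ∃ i ∈ S, i k = -1)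
    (hzero : (∑ i ∈ S.filter fun i => i (Fin.last d) = -1, w i)
        = ∑ i ∈ S.filter fun i => i (Fin.last d) = 1, w i)
    {m : Fin (d + 1) → Fin 4} (hm : m ∈ GammaIdx d S w) :
    ∃ κ : ℝ, 0 < κ ∧ ∀ ε δ : ℝ, 0 < ε → ε ≤ 1 / 4 → (d + 1) * δ ≤ 1 / 4 →
      ∀ θ : Fin (d + 1) → ℝ, (∀ j, |θ j - argOf d m j| ≤ δ) →
        ‖SbarC d S w (zOf d ε θ)‖
          ≤ S1 d S w * Real.exp (4 * ε ^ 2 - κ * ∑ j, (θ j - argOf d m j) ^ 2) := by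
  have hS : S.Nonempty := let ⟨i, hi, _⟩ := hfwd 0; ⟨i, hi⟩
  obtain ⟨c, hc1, hc⟩ := exists_common_phase hw hS hm
  have hm' := (Finset.mem_filter.mp hm).2.1
  have hS1 := S1_pos hw hS
  obtain ⟨i₀, hi₀, hmin⟩ := Finset.exists_min_image S w hS
  set μ := w i₀
  have hμ : 0 < μ := hw i₀ hi₀
  set L : ℝ := (d + 1) ^ 3 * (π ^ 2 / μ ^ 2) with hL
  have hLpos : 0 < L := by have := Real.pi_pos; positivity
  refine ⟨(2 * (L * S1 d S w ^ 2))⁻¹, by positivity, fun ε δ hε0 hε1 hδ θ hθ => ?_⟩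
  set P := ∑ i ∈ S, w i * (1 - ε) ^ (-i (Fin.last d)) with hP
  set s := ‖SbarC d S w (zOf d ε θ)‖
  set Φ := ∑ j, (θ j - argOf d m j) ^ 2 with hΦ
  have hpair := fun i hi k hk => sq_barForm_sub_le (w := w) hstep hm' hc1 hc hμ hmin hε0 hε1 hδ
    hθ (i := i) (k := k) hi hk
  have hcoord := abs_le_of_abs_barForm_sub_le hstep hsym hfwd hbwd
    (φ := fun j => θ j - argOf d m j) (t := √(π ^ 2 / μ ^ 2 * (P ^ 2 - s ^ 2)))
    (fun i hi k hk => Real.abs_le_sqrt (hpair i hi k hk))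
  have hM : 0 ≤ π ^ 2 / μ ^ 2 * (P ^ 2 - s ^ 2) :=
    (sq_nonneg _).trans (hpair i₀ hi₀ i₀ hi₀)
  have hΦle : Φ ≤ L * (P ^ 2 - s ^ 2) := by
    calc Φ ≤ ∑ _j : Fin (d + 1), (d + 1 : ℝ) ^ 2 * (π ^ 2 / μ ^ 2 * (P ^ 2 - s ^ 2)) := by
          refine Finset.sum_le_sum fun j _ => ?_
          have := pow_le_pow_left₀ (abs_nonneg _) (hcoord j) 2
          rwa [sq_abs, mul_pow, Real.sq_sqrt hM] at this
      _ = L * (P ^ 2 - s ^ 2) := by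
          rw [Finset.sum_const, Finset.card_univ, Fintype.card_fin, nsmul_eq_mul, hL]
          push_cast; ring
  have hP0 : 0 ≤ P := Finset.sum_nonneg fun i hi =>
    mul_nonneg (hw i hi).le (zpow_nonneg (by linarith) _)
  have hPle : P ^ 2 ≤ S1 d S w ^ 2 * (1 + 8 * ε ^ 2) := by
    have h1 := pow_le_pow_left₀ hP0 (sum_weights_zpow_le hstep hw hzero hε1) 2
    refine h1.trans ?_
    rw [mul_pow]
    refine mul_le_mul_of_nonneg_left ?_ (sq_nonneg _)
    nlinarith [mul_le_mul_of_nonneg_left (by nlinarith : ε ^ 2 ≤ 1) (sq_nonneg ε)]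
  have hexp := Real.add_one_le_exp (2 * (4 * ε ^ 2 - (2 * (L * S1 d S w ^ 2))⁻¹ * Φ))
  refine le_of_sq_le_sq ?_ (by positivity)
  rw [mul_pow, ← Real.exp_nat_mul]
  push_cast
  refine le_trans ?_ (mul_le_mul_of_nonneg_left hexp (sq_nonneg _))
  have hdiv : Φ / L ≤ P ^ 2 - s ^ 2 := by rw [div_le_iff₀ hLpos]; linarith
  have he : S1 d S w ^ 2 * (2 * (4 * ε ^ 2 - (2 * (L * S1 d S w ^ 2))⁻¹ * Φ) + 1)
      = S1 d S w ^ 2 * (1 + 8 * ε ^ 2) - Φ / L := by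
    field_simp
    ring
  rw [he]
  linarith

theorem norm_one_sub_mul_exp_le {ε x δ : ℝ} (hε0 : 0 ≤ ε) (hx : |x| ≤ δ) :
    ‖((1 - ε : ℝ) : ℂ) * Complex.exp (Complex.I * x) - 1‖ ≤ δ + ε := by
  have h : ((1 - ε : ℝ) : ℂ) * Complex.exp (Complex.I * x) - 1
      = (Complex.exp (Complex.I * x) - 1) - (ε : ℂ) * Complex.exp (Complex.I * x) := by
    push_cast; ring
  rw [h]
  refine (norm_sub_le _ _).trans (add_le_add ?_ ?_)
  · exact Real.norm_exp_I_mul_ofReal_sub_one_le.trans hx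
  · rw [norm_mul, Complex.norm_exp_I_mul_ofReal, mul_one, Complex.norm_real, Real.norm_eq_abs,
      abs_of_nonneg hε0]

theorem norm_zOf_last {ε : ℝ} (hε1 : ε ≤ 1) (θ : Fin (d + 1) → ℝ) :
    ‖zOf d ε θ (Fin.last d)‖ = 1 - ε := by
  have h : (1 - ε : ℂ) = ((1 - ε : ℝ) : ℂ) := by push_cast; rfl
  rw [zOf, if_pos rfl, norm_mul, Complex.norm_exp_I_mul_ofReal, mul_one, h, Complex.norm_real,
    Real.norm_eq_abs, abs_of_nonneg (by linarith)]

theorem norm_zOf_castSucc (ε : ℝ) (θ : Fin (d + 1) → ℝ) (j : Fin d) :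
    ‖zOf d ε θ j.castSucc‖ = 1 := by
  rw [zOf, if_neg (Fin.castSucc_lt_last j).ne, one_mul, Complex.norm_exp_I_mul_ofReal]

theorem norm_zOf_last_sub_le {m : Fin (d + 1) → Fin 4} {ε δ : ℝ} (hε0 : 0 ≤ ε)
    {θ : Fin (d + 1) → ℝ} (hθ : ∀ j, |θ j - argOf d m j| ≤ δ) :
    ‖zOf d ε θ (Fin.last d) - wOf d m (Fin.last d)‖ ≤ δ + ε := by
  have h := norm_one_sub_mul_exp_le hε0 (hθ (Fin.last d))
  rw [zOf_last m, ← mul_sub_one, norm_mul, norm_wOf, one_mul]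
  exact h

/-- A weighted sum of monomials with a common value `v` at `w` stays close to its value there. -/
theorem norm_sum_monomials_sub_le
    (hw : ∀ i ∈ S, 0 < w i) (hstep : ∀ i ∈ S, (∀ j, i j = -1 ∨ i j = 0 ∨ i j = 1) ∧ i ≠ 0)
    {m : Fin (d + 1) → Fin 4} {ε δ : ℝ} {θ : Fin (d + 1) → ℝ}
    (hθ : ∀ j, |θ j - argOf d m j| ≤ δ) {T : Finset (Fin (d + 1) → ℤ)} (hT : T ⊆ S) {v : ℂ}
    (hv1 : ‖v‖ = 1) (hv : ∀ i ∈ T, ∏ j : Fin d, wOf d m j.castSucc ^ i j.castSucc = v) :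
    ‖∑ i ∈ T, (w i : ℂ) * ∏ j : Fin d, zOf d ε θ j.castSucc ^ i j.castSucc
        - v * (∑ i ∈ T, w i : ℝ)‖ ≤ (∑ i ∈ T, w i) * (d * δ) := by
  rw [Complex.ofReal_sum, Finset.mul_sum, ← Finset.sum_sub_distrib, Finset.sum_mul]
  refine norm_sum_le_of_le _ fun i hi => ?_
  have h : (w i : ℂ) * ∏ j : Fin d, zOf d ε θ j.castSucc ^ i j.castSucc - v * (w i : ℂ)
      = (w i : ℂ) * v *
        (Complex.exp (Complex.I * hatForm i fun j => θ j - argOf d m j) - 1) := by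
    rw [prod_zOf_zpow m, hv i hi]; ring
  rw [h, norm_mul, norm_mul, hv1, mul_one, Complex.norm_real, Real.norm_eq_abs,
    abs_of_pos (hw i (hT hi))]
  refine mul_le_mul_of_nonneg_left ?_ (hw i (hT hi)).le
  exact Real.norm_exp_I_mul_ofReal_sub_one_le.trans
    (abs_hatForm_le (hstep i (hT hi)).1 fun j => hθ j.castSucc)

theorem wOf_pow_four (m : Fin (d + 1) → Fin 4) (j : Fin (d + 1)) : wOf d m j ^ 4 = 1 := by
  rw [wOf, ← pow_mul, mul_comm, pow_mul, Complex.I_pow_four, one_pow]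

/-- Near a point of `Γ`, `B` is bounded below and `B - z_{d+1}^2 A` is small. -/
theorem norm_BC_and_sub_bound (hw : ∀ i ∈ S, 0 < w i)
    (hstep : ∀ i ∈ S, (∀ j, i j = -1 ∨ i j = 0 ∨ i j = 1) ∧ i ≠ 0)
    (hfwd : ∃ i ∈ S, i (Fin.last d) = 1)
    (hzero : (∑ i ∈ S.filter fun i => i (Fin.last d) = -1, w i)
        = ∑ i ∈ S.filter fun i => i (Fin.last d) = 1, w i)
    {m : Fin (d + 1) → Fin 4} (hm : m ∈ GammaIdx d S w) {ε δ : ℝ} (hε0 : 0 < ε)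
    (hε1 : ε ≤ 1 / 4) (hδ : (d + 1) * δ ≤ 1 / 4) {θ : Fin (d + 1) → ℝ}
    (hθ : ∀ j, |θ j - argOf d m j| ≤ δ) :
    BC d S w (zOf d ε θ) ≠ 0 ∧
    ‖(BC d S w (zOf d ε θ) - zOf d ε θ (Fin.last d) ^ 2 * AC d S w (zOf d ε θ)) /
      BC d S w (zOf d ε θ)‖ ≤ 4 * (d + 1) * (δ + ε) := by
  have hS : S.Nonempty := let ⟨i, hi, _⟩ := hfwd; ⟨i, hi⟩
  obtain ⟨c, hc1, hc⟩ := exists_common_phase hw hS hm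
  have hδ0 : 0 ≤ δ := (abs_nonneg _).trans (hθ 0)
  set b := ∑ i ∈ S.filter (fun i => i (Fin.last d) = 1), w i with hb
  have hbpos : 0 < b := by
    obtain ⟨i, hi, h1⟩ := hfwd
    exact Finset.sum_pos (fun i hi => hw i (Finset.mem_filter.mp hi).1)
      ⟨i, Finset.mem_filter.mpr ⟨hi, h1⟩⟩
  set q := wOf d m (Fin.last d) with hq
  set z := zOf d ε θ (Fin.last d) with hz
  have hq1 : ‖q‖ = 1 := norm_wOf _ _
  have hB : ‖BC d S w (zOf d ε θ) - c * q⁻¹ * b‖ ≤ b * (d * δ) := by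
    refine norm_sum_monomials_sub_le hw hstep hθ (Finset.filter_subset _ _) (by simp [hc1, hq1])
      fun i hi => ?_
    have hi' := Finset.mem_filter.mp hi
    rw [prod_wOf_eq_mul_zpow_neg (hc i hi'.1), hi'.2, zpow_neg, zpow_one]
  have hA : ‖AC d S w (zOf d ε θ) - c * q * b‖ ≤ b * (d * δ) := by
    rw [← hzero]
    refine norm_sum_monomials_sub_le hw hstep hθ (Finset.filter_subset _ _) (by simp [hc1, hq1])
      fun i hi => ?_
    have hi' := Finset.mem_filter.mp hi
    rw [prod_wOf_eq_mul_zpow_neg (hc i hi'.1), hi'.2, neg_neg, zpow_one]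
  have hBlow : b / 2 ≤ ‖BC d S w (zOf d ε θ)‖ := by
    have h1 : ‖c * q⁻¹ * (b : ℂ)‖ = b := by
      simp [hc1, hq1, abs_of_pos hbpos]
    have h2 := norm_sub_norm_le (c * q⁻¹ * (b : ℂ)) (BC d S w (zOf d ε θ))
    rw [norm_sub_rev, h1] at h2
    have h3 : b * (d * δ) ≤ b * (1 / 4) := mul_le_mul_of_nonneg_left (by linarith) hbpos.le
    linarith
  have hBpos : 0 < ‖BC d S w (zOf d ε θ)‖ := lt_of_lt_of_le (by positivity) hBlow
  refine ⟨norm_pos_iff.mp hBpos, ?_⟩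
  have hz1 : ‖z‖ ≤ 1 := by rw [hz, norm_zOf_last (by linarith)]; linarith
  have hzq : ‖z - q‖ ≤ δ + ε := norm_zOf_last_sub_le hε0.le hθ
  have hzq2 : ‖z ^ 2 - q ^ 2‖ ≤ 2 * (δ + ε) := by
    rw [sq_sub_sq, norm_mul]
    refine mul_le_mul ((norm_add_le _ _).trans (by linarith)) hzq (norm_nonneg _) (by norm_num)
  have hq3 : q⁻¹ = q ^ 2 * q := by
    have h4 : q ^ 4 = 1 := wOf_pow_four _ _
    have h0 : q ≠ 0 := wOf_ne_zero _ _
    field_simp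
    linear_combination -h4
  have hdecomp : BC d S w (zOf d ε θ) - z ^ 2 * AC d S w (zOf d ε θ)
      = (BC d S w (zOf d ε θ) - c * q⁻¹ * b) - z ^ 2 * (AC d S w (zOf d ε θ) - c * q * b)
        - (z ^ 2 - q ^ 2) * (c * q * b) := by
    rw [hq3]; ring
  have hnum : ‖BC d S w (zOf d ε θ) - z ^ 2 * AC d S w (zOf d ε θ)‖
      ≤ b * (2 * (d + 1) * (δ + ε)) := by
    rw [hdecomp]
    have h1 : ‖z ^ 2 * (AC d S w (zOf d ε θ) - c * q * b)‖ ≤ b * (d * δ) := by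
      rw [norm_mul, norm_pow]
      exact (mul_le_of_le_one_left (norm_nonneg _)
        (pow_le_one₀ (norm_nonneg _) hz1)).trans hA
    have h2 : ‖(z ^ 2 - q ^ 2) * (c * q * b)‖ ≤ 2 * (δ + ε) * b := by
      have h3 : ‖c * q * (b : ℂ)‖ = b := by simp [hc1, hq1, abs_of_pos hbpos]
      rw [norm_mul, h3]
      exact mul_le_mul_of_nonneg_right hzq2 hbpos.le
    have h4 : 0 ≤ b * (d * ε) := by positivity
    refine (norm_sub_le _ _).trans ((add_le_add ((norm_sub_le _ _).trans
      (add_le_add hB h1)) h2).trans ?_)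
    linarith
  rw [norm_div, div_le_iff₀ hBpos]
  refine hnum.trans ?_
  have : 4 * (d + 1) * (δ + ε) * (b / 2) ≤ 4 * (d + 1) * (δ + ε) * ‖BC d S w (zOf d ε θ)‖ :=
    mul_le_mul_of_nonneg_left hBlow (by positivity)
  linarith

theorem norm_one_add_zOf_le_two (ε : ℝ) (θ : Fin (d + 1) → ℝ) (j : Fin d) :
    ‖1 + zOf d ε θ j.castSucc‖ ≤ 2 := by
  refine (norm_add_le _ _).trans ?_
  rw [norm_zOf_castSucc, norm_one]; norm_num

theorem norm_prod_one_add_zOf_le (ε : ℝ) (θ : Fin (d + 1) → ℝ) :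
    ‖∏ j : Fin d, (1 + zOf d ε θ j.castSucc)‖ ≤ 2 ^ d := by
  rw [norm_prod]
  refine (Finset.prod_le_prod (fun _ _ => norm_nonneg _)
    fun j _ => norm_one_add_zOf_le_two ε θ j).trans ?_
  simp

theorem norm_prod_one_add_zOf_le_mul {m : Fin (d + 1) → Fin 4} {j : Fin d}
    (hj : m j.castSucc = 2) {ε δ : ℝ} {θ : Fin (d + 1) → ℝ}
    (hθ : ∀ j, |θ j - argOf d m j| ≤ δ) :
    ‖∏ j : Fin d, (1 + zOf d ε θ j.castSucc)‖ ≤ 2 ^ d * δ := by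
  have hδ0 : 0 ≤ δ := (abs_nonneg _).trans (hθ 0)
  have h1 : ‖1 + zOf d ε θ j.castSucc‖ ≤ δ := by
    have hz : 1 + zOf d ε θ j.castSucc
        = -(Complex.exp (Complex.I * (θ j.castSucc - argOf d m j.castSucc : ℝ)) - 1) := by
      rw [zOf_castSucc m, wOf, hj]
      simp [Complex.I_sq]
      ring
    rw [hz, norm_neg]
    exact Real.norm_exp_I_mul_ofReal_sub_one_le.trans (hθ _)
  rw [norm_prod, ← Finset.mul_prod_erase _ _ (Finset.mem_univ j), mul_comm]
  refine mul_le_mul ?_ h1 (norm_nonneg _) (by positivity)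
  refine (Finset.prod_le_prod (fun _ _ => norm_nonneg _)
    fun j _ => norm_one_add_zOf_le_two ε θ j).trans ?_
  rw [Finset.prod_const]
  exact pow_le_pow_right₀ one_le_two ((Finset.card_le_univ _).trans (by simp))

theorem one_le_norm_one_sub_wOf {m : Fin (d + 1) → Fin 4} {j : Fin (d + 1)} (hj : m j ≠ 0) :
    1 ≤ ‖1 - wOf d m j‖ := by
  refine le_trans ?_ (Complex.re_le_norm _)
  rw [wOf]
  generalize m j = k at hj
  fin_cases k
  · exact absurd rfl hj
  · simp
  · simp
  · simp [pow_succ]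

/-- Away from `(1,…,1)` the numerator factors beat the pole `1 / (1 - z_{d+1})`. -/
theorem norm_prod_div_one_sub_le {m : Fin (d + 1) → Fin 4}
    (hm : ∀ j : Fin d, m j.castSucc = 0 ∨ m j.castSucc = 2) (hm1 : m ≠ fun _ => 0)
    {ε δ : ℝ} (hε0 : 0 < ε) (hε1 : ε ≤ 1 / 4) (hδ : (d + 1) * δ ≤ 1 / 4)
    {θ : Fin (d + 1) → ℝ} (hθ : ∀ j, |θ j - argOf d m j| ≤ δ) :
    ‖(∏ j : Fin d, (1 + zOf d ε θ j.castSucc)) / (1 - zOf d ε θ (Fin.last d))‖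
      ≤ 2 ^ d * (δ / ε + 2) := by
  have hδ0 : 0 ≤ δ := (abs_nonneg _).trans (hθ 0)
  have hδ1 : δ ≤ 1 / 4 := by
    have : 0 ≤ (d : ℝ) * δ := by positivity
    linarith
  have hεz : ε ≤ ‖1 - zOf d ε θ (Fin.last d)‖ := by
    have h := norm_sub_norm_le (1 : ℂ) (zOf d ε θ (Fin.last d))
    rw [norm_one, norm_zOf_last (by linarith)] at h
    linarith
  by_cases h2 : ∃ j : Fin d, m j.castSucc = 2
  · obtain ⟨j, hj⟩ := h2
    have hle : ‖(∏ j : Fin d, (1 + zOf d ε θ j.castSucc)) / (1 - zOf d ε θ (Fin.last d))‖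
        ≤ 2 ^ d * (δ / ε) := by
      rw [norm_div, ← mul_div_assoc]
      exact div_le_div₀ (by positivity) (norm_prod_one_add_zOf_le_mul hj hθ) hε0 hεz
    exact hle.trans (mul_le_mul_of_nonneg_left (by linarith) (by positivity))
  · have hlast : m (Fin.last d) ≠ 0 := by
      intro hl
      apply hm1
      funext j
      induction j using Fin.lastCases with
      | last => exact hl
      | cast j => exact (hm j).resolve_right fun h => h2 ⟨j, h⟩
    have hz : 1 / 2 ≤ ‖1 - zOf d ε θ (Fin.last d)‖ := by
      have h1 := one_le_norm_one_sub_wOf hlast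
      have h3 := norm_zOf_last_sub_le hε0.le hθ
      have h4 := norm_add_le (1 - zOf d ε θ (Fin.last d))
        (zOf d ε θ (Fin.last d) - wOf d m (Fin.last d))
      rw [sub_add_sub_cancel] at h4
      linarith
    rw [norm_div]
    refine (div_le_div₀ (by positivity) (norm_prod_one_add_zOf_le ε θ) (by norm_num) hz).trans ?_
    have : 0 ≤ δ / ε := by positivity
    have h2d : (0 : ℝ) < 2 ^ d := by positivity
    nlinarith [mul_nonneg h2d.le this]

theorem resIntegrand_eq {n : ℕ} {ε : ℝ} (hε1 : ε ≤ 1 / 4) {θ : Fin (d + 1) → ℝ}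
    (hB : BC d S w (zOf d ε θ) ≠ 0) :
    resIntegrand d S w n ε θ
      = (∏ j : Fin d, (1 + zOf d ε θ j.castSucc)) / (1 - zOf d ε θ (Fin.last d)) *
        ((BC d S w (zOf d ε θ) - zOf d ε θ (Fin.last d) ^ 2 * AC d S w (zOf d ε θ)) /
          BC d S w (zOf d ε θ)) *
        SbarC d S w (zOf d ε θ) ^ n * Complex.I ^ (d + 1) := by
  have hz : ∏ j, zOf d ε θ j ≠ 0 := by
    refine Finset.prod_ne_zero_iff.mpr fun j _ => norm_pos_iff.mp ?_
    induction j using Fin.lastCases with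
    | last => rw [norm_zOf_last (by linarith)]; linarith
    | cast j => rw [norm_zOf_castSucc]; exact one_pos
  rw [resIntegrand, Finset.prod_mul_distrib, Finset.prod_const, Finset.card_univ,
    Fintype.card_fin]
  generalize ∏ j, zOf d ε θ j = p at hz
  generalize BC d S w (zOf d ε θ) = b at hB
  field_simp

/-- The residue integral over `N_w` is bounded by a Gaussian integral times a prefactor that
vanishes with `ε` and `δ`. -/
theorem exists_norm_resIntegral_le
    (hstep : ∀ i ∈ S, (∀ j, i j = -1 ∨ i j = 0 ∨ i j = 1) ∧ i ≠ 0)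
    (hw : ∀ i ∈ S, 0 < w i)
    (hsym : ∀ k : Fin d, SymmetricAxis (d + 1) S w (Fin.castSucc k))
    (hfwd : ∀ k : Fin (d + 1), ∃ i ∈ S, i k = 1)
    (hbwd : ∀ k : Fin (d + 1), ∃ i ∈ S, i k = -1)
    (hzero : (∑ i ∈ S.filter fun i => i (Fin.last d) = -1, w i)
        = ∑ i ∈ S.filter fun i => i (Fin.last d) = 1, w i)
    {m : Fin (d + 1) → Fin 4} (hm : m ∈ GammaIdx d S w) (hm1 : m ≠ fun _ => 0) :
    ∃ C : ℝ, ∀ (n : ℕ) (ε δ : ℝ), 0 < n → 0 < ε → ε ≤ 1 / 4 → 0 ≤ δ → (d + 1) * δ ≤ 1 / 4 →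
      n * ε ^ 2 ≤ 1 →
      ‖resIntegral d S w n ε δ m‖
        ≤ C * ((δ / ε + 2) * (δ + ε)) * (S1 d S w ^ n * (n : ℝ) ^ (-((d : ℝ) + 1) / 2)) := by
  have hS : S.Nonempty := let ⟨i, hi, _⟩ := hfwd 0; ⟨i, hi⟩
  have hS1 := S1_pos hw hS
  obtain ⟨κ, hκ, hbar⟩ := exists_norm_SbarC_le hstep hw hsym hfwd hbwd hzero hm
  refine ⟨2 ^ d * (4 * (d + 1)) * Real.exp 4 * √(π / κ) ^ (d + 1),
    fun n ε δ hn hε0 hε1 hδ0 hδ hnε => ?_⟩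
  have hn0 : (0 : ℝ) < n := by exact_mod_cast hn
  have hbound := norm_setIntegral_le_gaussian (resIntegrand d S w n ε) (box d m δ)
    (MeasurableSet.univ_pi fun _ => measurableSet_Ioo) (argOf d m) (mul_pos hκ hn0)
    (K := 2 ^ d * (δ / ε + 2) * (4 * (d + 1) * (δ + ε)) * (S1 d S w ^ n * Real.exp 4))
    (by positivity) ?_
  · refine hbound.trans (le_of_eq ?_)
    have hgauss : √(π / (κ * n)) ^ Fintype.card (Fin (d + 1))
        = √(π / κ) ^ (d + 1) * (n : ℝ) ^ (-((d : ℝ) + 1) / 2) := by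
      rw [Fintype.card_fin, ← div_div, Real.sqrt_div' _ hn0.le, div_pow, div_eq_mul_inv,
        Real.sqrt_eq_rpow (n : ℝ), ← Real.rpow_natCast, ← Real.rpow_natCast, ← Real.rpow_mul hn0.le,
        ← Real.rpow_neg hn0.le]
      push_cast
      ring_nf
    rw [hgauss]
    ring
  · intro θ hθbox
    have hθ : ∀ j, |θ j - argOf d m j| ≤ δ := fun j => by
      have h := hθbox j (Set.mem_univ j)
      rw [Set.mem_Ioo] at h
      rw [abs_le]
      constructor <;> linarith [h.1, h.2]
    obtain ⟨hB, hratio⟩ := norm_BC_and_sub_bound hw hstep (hfwd _) hzero hm hε0 hε1 hδ hθ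
    have hpole := norm_prod_div_one_sub_le (Finset.mem_filter.mp hm).2.1 hm1 hε0 hε1 hδ hθ
    have hpow : ‖SbarC d S w (zOf d ε θ)‖ ^ n ≤ S1 d S w ^ n * Real.exp 4 *
        ∏ j, Real.exp (-(κ * n) * (θ j - argOf d m j) ^ 2) := by
      refine (pow_le_pow_left₀ (norm_nonneg _) (hbar ε δ hε0 hε1 hδ θ hθ) n).trans ?_
      rw [mul_pow, ← Real.exp_nat_mul, mul_assoc, ← Real.exp_sum, ← Real.exp_add,
        ← Finset.mul_sum]
      refine mul_le_mul_of_nonneg_left (Real.exp_le_exp.mpr ?_) (by positivity)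
      linarith
    rw [resIntegrand_eq hε1 hB, norm_mul, norm_mul, norm_mul, norm_pow, norm_pow, Complex.norm_I,
      one_pow, mul_one, mul_assoc (_ * _) (_ * _) (Finset.prod _ _)]
    exact mul_le_mul (mul_le_mul hpole hratio (norm_nonneg _) (by positivity)) hpow
      (by positivity) (by positivity)

end ZeroDrift

theorem tendsto_natCast_rpow_neg {a : ℝ} (ha : 0 < a) :
    Tendsto (fun n : ℕ => (n : ℝ) ^ (-a)) atTop (nhds 0) :=
  (tendsto_rpow_neg_atTop ha).comp tendsto_natCast_atTop_atTop

theorem tendsto_prefactor {α β : ℝ} (hα : 0 < α) (hβ : 0 < β) (hαβ : α < 2 * β) :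
    Tendsto (fun n : ℕ => ((n : ℝ) ^ (-β) / (n : ℝ) ^ (-α) + 2) *
      ((n : ℝ) ^ (-β) + (n : ℝ) ^ (-α))) atTop (nhds 0) := by
  have h := ((tendsto_natCast_rpow_neg (a := 2 * β - α) (by linarith)).add
    ((tendsto_natCast_rpow_neg hβ).const_mul 3)).add ((tendsto_natCast_rpow_neg hα).const_mul 2)
  simp only [mul_zero, add_zero] at h
  refine h.congr' ?_
  filter_upwards [eventually_gt_atTop 0] with n hn
  have hn0 : (0 : ℝ) < n := by exact_mod_cast hn
  have hne : (n : ℝ) ^ (-α) ≠ 0 := (Real.rpow_pos_of_pos hn0 _).ne'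
  have h1 : (n : ℝ) ^ (-(2 * β - α)) * (n : ℝ) ^ (-α) = (n : ℝ) ^ (-β) * (n : ℝ) ^ (-β) := by
    rw [← Real.rpow_add hn0, ← Real.rpow_add hn0]; ring_nf
  field_simp
  linear_combination h1


/-- Proposition (other points are negligible): for `w ∈ Γ` with `w ≠ (1,…,1)`, the
residue integral over `N_w` is `o(S(1)^n n^{-(d+1)/2})`. -/
theorem other_points_negligible
    (d : ℕ) (S : Finset (Fin (d + 1) → ℤ)) (w : (Fin (d + 1) → ℤ) → ℝ)
    (hstep : ∀ i ∈ S, (∀ j, i j = -1 ∨ i j = 0 ∨ i j = 1) ∧ i ≠ 0)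
    (hw : ∀ i ∈ S, 0 < w i)
    (hsym : ∀ k : Fin d, SymmetricAxis (d + 1) S w (Fin.castSucc k))
    (hfwd : ∀ k : Fin (d + 1), ∃ i ∈ S, i k = 1)
    (hbwd : ∀ k : Fin (d + 1), ∃ i ∈ S, i k = -1)
    (hzero : (∑ i ∈ S.filter fun i => i (Fin.last d) = -1, w i)
        = ∑ i ∈ S.filter fun i => i (Fin.last d) = 1, w i)
    (α β : ℝ) (hα : 1 / 2 < α) (hαβ : α < 2 * β) (hsum : 1 < α + β)
    (hβ1 : 1 / 3 < β) (hβ2 : β < 1 / 2)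
    (m : Fin (d + 1) → Fin 4) (hm : m ∈ ZeroDrift.GammaIdx d S w)
    (hm1 : m ≠ fun _ => 0) :
    Tendsto (fun n : ℕ =>
      ‖ZeroDrift.resIntegral d S w n ((n : ℝ) ^ (-α)) ((n : ℝ) ^ (-β)) m‖ /
        (ZeroDrift.S1 d S w ^ n * (n : ℝ) ^ (-((d : ℝ) + 1) / 2)))
      atTop (nhds 0) := by
  obtain ⟨C, hC⟩ := ZeroDrift.exists_norm_resIntegral_le hstep hw hsym hfwd hbwd hzero hm hm1
  have hS1 : 0 < ZeroDrift.S1 d S w :=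
    ZeroDrift.S1_pos hw (let ⟨i, hi, _⟩ := hfwd 0; ⟨i, hi⟩)
  have hlim := (tendsto_prefactor (by linarith) (by linarith) hαβ).const_mul C
  rw [mul_zero] at hlim
  refine squeeze_zero' ?_ ?_ hlim
  · filter_upwards with n
    positivity
  · have hε := (tendsto_natCast_rpow_neg (a := α) (by linarith)).eventually_le_const
      (show (0 : ℝ) < 1 / 4 by norm_num)
    have hδ := ((tendsto_natCast_rpow_neg (a := β) (by linarith)).const_mul
      ((d : ℝ) + 1)).eventually_le_const (show ((d : ℝ) + 1) * 0 < 1 / 4 by norm_num)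
    filter_upwards [hε, hδ, eventually_gt_atTop 0] with n hεn hδn hn
    have hn0 : (0 : ℝ) < n := by exact_mod_cast hn
    have hn1 : (1 : ℝ) ≤ n := by exact_mod_cast hn
    have hnε : (n : ℝ) * ((n : ℝ) ^ (-α)) ^ 2 ≤ 1 := by
      have h : (n : ℝ) * ((n : ℝ) ^ (-α)) ^ 2 = (n : ℝ) ^ (1 - 2 * α) := by
        rw [← Real.rpow_natCast, ← Real.rpow_mul hn0.le, ← Real.rpow_one_add' hn0.le]
        · push_cast; ring_nf
        · push_cast; linarith
      rw [h]
      exact Real.rpow_le_one_of_one_le_of_nonpos hn1 (by linarith)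
    rw [div_le_iff₀ (by positivity)]
    exact hC n _ _ hn (by positivity) hεn (by positivity) hδn hnε

end
end
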